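/- arXiv:2401.03380 — 4 statements merged into one kernel-verified Lean document; each statement's English description precedes it below -/
import Mathlib

section
/- The alternating Mordell–Tornheim value T(\bar1,\bar1;1) = ∑_{m1,m2≥1} (-1)^{m1+m2}/(m1·m2·(m1+m2)) equals (1/4)ζ(3). -/
/-!
Write `A`, `B`, `C` for the sums of `1 / (m n (m + n))` over `m, n ≥ 1` weighted by `1`,
`(-1) ^ (m + n)` and `(-1) ^ m` respectively. By partial fractions, the terms with `m` fixed add
up to `H_m / m²`, and the terms with `m + n = k` to `2 H_{k-1} / k² = 2 (H_k / k² - 1 / k³)`.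
Hence, for any weight `ε`, the sums weighted by `ε m` and by `ε (m + n) / 2` differ only by
`∑ ε n / n³`; the weights `1` and `(-1) ^ n` give `A = 2 ζ(3)` and `C = B / 2 - 3 ζ(3) / 4`.
The terms with `m` and `n` both even have sum `A / 8` by homogeneity, so `A + B + 2 C = A / 2`,
and `B = ζ(3) / 4` follows.
-/

open Filter Finset Function Topology

section Series

theorem tsum_pnat_of_apply_zero {M : Type*} [AddCommMonoid M] [TopologicalSpace M]
    {f : ℕ → M} (hf : f 0 = 0) : ∑' n : ℕ+, f n = ∑' n, f n := by
  refine PNat.coe_injective.tsum_eq fun n hn => ?_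
  have hn0 : n ≠ 0 := by
    rintro rfl
    exact hn hf
  exact ⟨⟨n, Nat.pos_of_ne_zero hn0⟩, rfl⟩

theorem hasSum_sum_antidiagonal {M : Type*} [AddCommMonoid M] [TopologicalSpace M]
    [ContinuousAdd M] [RegularSpace M] {f : ℕ × ℕ → M} {a : M} (hf : HasSum f a) :
    HasSum (fun k => ∑ p ∈ antidiagonal k, f p) a := by
  have hsigma := HasAntidiagonal.sigmaAntidiagonalEquivProd.hasSum_iff.mpr hf
  refine hsigma.sigma fun k => ?_
  rw [← sum_coe_sort]
  exact hasSum_fintype _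

theorem hasSum_sub_add_of_antitone {f : ℕ → ℝ} {l : ℝ} (hf : Antitone f)
    (hl : Tendsto f atTop (𝓝 l)) (m : ℕ) :
    HasSum (fun n => f n - f (n + m)) (∑ i ∈ range m, (f i - l)) := by
  have partial_sum (N : ℕ) :
      ∑ n ∈ range N, (f n - f (n + m)) = ∑ i ∈ range m, (f i - f (N + i)) := by
    have hN := sum_range_add f N m
    have hm := sum_range_add f m N
    rw [add_comm m N] at hm
    simp only [sum_sub_distrib, add_comm _ m] at hN hm ⊢
    linarith
  rw [hasSum_iff_tendsto_nat_of_nonneg fun n => sub_nonneg.mpr (hf (Nat.le_add_right n m))]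
  simp only [partial_sum]
  refine tendsto_finsetSum _ fun i _ => tendsto_const_nhds.sub ?_
  exact hl.comp (tendsto_add_atTop_nat i)

theorem hasSum_one_div_succ_sub_one_div_add_succ (m : ℕ) :
    HasSum (fun n : ℕ => 1 / ((n : ℝ) + 1) - 1 / ((n + m : ℕ) + 1 : ℝ)) (harmonic m) := by
  have h := hasSum_sub_add_of_antitone (fun _ _ => Nat.one_div_le_one_div (α := ℝ))
    tendsto_one_div_add_atTop_nhds_zero_nat m
  simpa [harmonic] using h

theorem summable_mul_neg_one_pow {ι : Type*} {f : ι → ℝ} (hf : Summable f) (e : ι → ℕ) :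
    Summable fun i => f i * (-1) ^ e i :=
  Summable.of_norm (by simpa using hf.norm)

theorem one_add_neg_one_pow_of_notMem_range {R : Type*} [Ring R] {n : ℕ}
    (hn : n ∉ Set.range (2 * · : ℕ → ℕ)) : 1 + (-1 : R) ^ n = 0 := by
  rw [range_two_mul, Set.mem_ofPred_eq, Nat.not_even_iff_odd] at hn
  simp [hn.neg_one_pow]

variable {𝕜 : Type*} [Field 𝕜] [TopologicalSpace 𝕜] [IsTopologicalRing 𝕜] [T2Space 𝕜]

theorem tsum_mul_one_add_neg_one_pow (f : ℕ → 𝕜) :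
    ∑' n, f n * (1 + (-1) ^ n) = 2 * ∑' n, f (2 * n) := by
  have inj : Injective (2 * · : ℕ → ℕ) := mul_right_injective₀ two_ne_zero
  rw [← inj.tsum_eq, ← tsum_mul_left]
  · refine tsum_congr fun n => ?_
    simp only [(even_two_mul n).neg_one_pow]
    ring
  · refine support_subset_iff'.mpr fun n hn => ?_
    rw [one_add_neg_one_pow_of_notMem_range hn, mul_zero]

theorem tsum_prod_mul_one_add_neg_one_pow (f : ℕ × ℕ → 𝕜) :
    ∑' p, f p * ((1 + (-1) ^ p.1) * (1 + (-1) ^ p.2)) = 4 * ∑' p : ℕ × ℕ, f (2 * p.1, 2 * p.2) := by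
  have inj : Injective (2 * · : ℕ → ℕ) := mul_right_injective₀ two_ne_zero
  rw [← (inj.prodMap inj).tsum_eq, ← tsum_mul_left]
  · refine tsum_congr fun p => ?_
    simp only [Prod.map, (even_two_mul _).neg_one_pow]
    ring
  · refine support_subset_iff'.mpr fun p hp => ?_
    rw [Set.range_prodMap, Set.mem_prod, not_and_or] at hp
    rcases hp with hp | hp <;> simp [one_add_neg_one_pow_of_notMem_range hp]

theorem tsum_inv_pow_mul_neg_one_pow {k : ℕ} (hk : 1 < k) :
    ∑' n : ℕ, ((n : ℝ) ^ k)⁻¹ * (-1) ^ n = (2 / 2 ^ k - 1) * ∑' n : ℕ, ((n : ℝ) ^ k)⁻¹ := by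
  have hs : Summable fun n : ℕ => ((n : ℝ) ^ k)⁻¹ := Real.summable_nat_pow_inv.mpr hk
  have even_part := tsum_mul_one_add_neg_one_pow fun n : ℕ => ((n : ℝ) ^ k)⁻¹
  simp only [mul_add, mul_one, Nat.cast_mul, Nat.cast_ofNat, mul_pow, mul_inv, tsum_mul_left]
    at even_part
  rw [hs.tsum_add (summable_mul_neg_one_pow hs _)] at even_part
  linear_combination even_part

end Series

/-- The summand `1 / (m n (m + n))` of the Mordell–Tornheim series at `(m, n)`. It is indexed by all
of `ℕ × ℕ`: since `0⁻¹ = 0`, the terms with `m = 0` or `n = 0` vanish. -/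
noncomputable def tornheimTerm (p : ℕ × ℕ) : ℝ :=
  ((p.1 : ℝ) * p.2 * (p.1 + p.2))⁻¹

theorem tornheimTerm_swap (p : ℕ × ℕ) : tornheimTerm p.swap = tornheimTerm p := by
  simp only [tornheimTerm, Prod.fst_swap, Prod.snd_swap]
  ring

theorem tornheimTerm_mul_mul (d m n : ℕ) :
    tornheimTerm (d * m, d * n) = ((d : ℝ) ^ 3)⁻¹ * tornheimTerm (m, n) := by
  simp only [tornheimTerm, Nat.cast_mul, ← mul_inv]
  ring

theorem rpow_three_halves_mul_rpow_three_halves_le {x y : ℝ} (hx : 0 ≤ x) (hy : 0 ≤ y) :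
    x ^ (3 / 2 : ℝ) * y ^ (3 / 2 : ℝ) ≤ x * y * (x + y) := by
  have rpow_eq {z : ℝ} (hz : 0 ≤ z) : z ^ (3 / 2 : ℝ) = z * √z := by
    rw [Real.sqrt_eq_rpow, ← Real.rpow_one_add' hz (by norm_num)]
    norm_num
  have sqrt_mul_sqrt_le : √x * √y ≤ x + y := by
    have amgm := two_mul_le_add_sq √x √y
    rw [Real.sq_sqrt hx, Real.sq_sqrt hy] at amgm
    nlinarith [Real.sqrt_nonneg x, Real.sqrt_nonneg y]
  calc x ^ (3 / 2 : ℝ) * y ^ (3 / 2 : ℝ) = x * y * (√x * √y) := by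
        rw [rpow_eq hx, rpow_eq hy]
        ring
    _ ≤ x * y * (x + y) := by gcongr

theorem tornheimTerm_nonneg (p : ℕ × ℕ) : 0 ≤ tornheimTerm p := by
  unfold tornheimTerm
  positivity

theorem tornheimTerm_le_rpow_inv_mul_rpow_inv (p : ℕ × ℕ) :
    tornheimTerm p ≤ ((p.1 : ℝ) ^ (3 / 2 : ℝ))⁻¹ * ((p.2 : ℝ) ^ (3 / 2 : ℝ))⁻¹ := by
  obtain ⟨m, n⟩ := p
  rcases Nat.eq_zero_or_pos m with rfl | hm
  · simp [tornheimTerm]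
  rcases Nat.eq_zero_or_pos n with rfl | hn
  · simp [tornheimTerm]
  rw [← mul_inv]
  exact inv_anti₀ (by positivity)
    (rpow_three_halves_mul_rpow_three_halves_le m.cast_nonneg n.cast_nonneg)

theorem summable_tornheimTerm : Summable tornheimTerm := by
  have hs : Summable fun n : ℕ => ((n : ℝ) ^ (3 / 2 : ℝ))⁻¹ :=
    Real.summable_nat_rpow_inv.mpr (by norm_num)
  exact Summable.of_nonneg_of_le tornheimTerm_nonneg tornheimTerm_le_rpow_inv_mul_rpow_inv
    (hs.mul_of_nonneg hs (fun _ => by positivity) (fun _ => by positivity))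

theorem hasSum_tornheimTerm_right (m : ℕ) :
    HasSum (fun n => tornheimTerm (m, n)) (harmonic m / (m : ℝ) ^ 2) := by
  rcases Nat.eq_zero_or_pos m with rfl | hm
  · simp [tornheimTerm, hasSum_zero]
  have partial_fractions (n : ℕ) : tornheimTerm (m, n + 1) =
      (1 / ((n : ℝ) + 1) - 1 / ((n + m : ℕ) + 1 : ℝ)) / (m : ℝ) ^ 2 := by
    simp only [tornheimTerm]
    push_cast
    field_simp
    ring
  have term_zero : tornheimTerm (m, 0) = 0 := by simp [tornheimTerm]
  rw [← hasSum_nat_add_iff' 1, sum_range_one, term_zero, sub_zero]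
  simp only [partial_fractions]
  exact (hasSum_one_div_succ_sub_one_div_add_succ m).div_const _

theorem sum_antidiagonal_inv_succ_fst (k : ℕ) :
    ∑ p ∈ antidiagonal k, ((p.1 : ℝ) + 1)⁻¹ = harmonic (k + 1) := by
  rw [Nat.sum_antidiagonal_eq_sum_range_succ (fun i _ => ((i : ℝ) + 1)⁻¹)]
  simp [harmonic]

theorem sum_antidiagonal_tornheimTerm_succ_succ (k : ℕ) :
    ∑ p ∈ antidiagonal k, tornheimTerm (p.1 + 1, p.2 + 1) =
      2 * (harmonic (k + 1) / ((k : ℝ) + 2) ^ 2) := by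
  have partial_fractions : ∀ p ∈ antidiagonal k, tornheimTerm (p.1 + 1, p.2 + 1) =
      (((p.1 : ℝ) + 1)⁻¹ + ((p.2 : ℝ) + 1)⁻¹) / ((k : ℝ) + 2) ^ 2 := by
    intro p hp
    rw [← mem_antidiagonal.mp hp]
    simp only [tornheimTerm]
    push_cast
    field_simp
    ring
  have sum_inv_snd : ∑ p ∈ antidiagonal k, ((p.2 : ℝ) + 1)⁻¹ = harmonic (k + 1) := by
    rw [← sum_antidiagonal_inv_succ_fst, ← Nat.sum_antidiagonal_swap]
    simp only [Prod.snd_swap]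
  rw [sum_congr rfl partial_fractions, ← sum_div, sum_add_distrib, sum_antidiagonal_inv_succ_fst,
    sum_inv_snd]
  ring

theorem sum_antidiagonal_tornheimTerm (k : ℕ) :
    ∑ p ∈ antidiagonal k, tornheimTerm p =
      2 * (harmonic k / (k : ℝ) ^ 2 - ((k : ℝ) ^ 3)⁻¹) := by
  match k with
  | 0 => simp [tornheimTerm]
  | 1 => simp [tornheimTerm, Nat.antidiagonal_succ]
  | k + 2 =>
    have interior : ∑ p ∈ antidiagonal (k + 2), tornheimTerm p =
        ∑ p ∈ antidiagonal k, tornheimTerm (p.1 + 1, p.2 + 1) := by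
      simp [Nat.antidiagonal_succ_succ', tornheimTerm]
    rw [interior, sum_antidiagonal_tornheimTerm_succ_succ, harmonic_succ (k + 1)]
    push_cast
    field_simp
    ring

theorem tsum_tornheimTerm_smul_fst {E : Type*} [NormedAddCommGroup E] [NormedSpace ℝ E] {ε : ℕ → E}
    (hfst : Summable fun p : ℕ × ℕ => tornheimTerm p • ε p.1)
    (hadd : Summable fun p : ℕ × ℕ => tornheimTerm p • ε (p.1 + p.2)) :
    ∑' p : ℕ × ℕ, tornheimTerm p • ε p.1 =
      (1 / 2 : ℝ) • ∑' p : ℕ × ℕ, tornheimTerm p • ε (p.1 + p.2) +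
        ∑' n : ℕ, ((n : ℝ) ^ 3)⁻¹ • ε n := by
  have by_fst : HasSum (fun m : ℕ => (harmonic m / (m : ℝ) ^ 2) • ε m)
      (∑' p : ℕ × ℕ, tornheimTerm p • ε p.1) :=
    hfst.hasSum.prod_fiberwise fun m => (hasSum_tornheimTerm_right m).smul_const (ε m)
  have by_add : HasSum (fun k : ℕ => (2 * (harmonic k / (k : ℝ) ^ 2 - ((k : ℝ) ^ 3)⁻¹)) • ε k)
      (∑' p : ℕ × ℕ, tornheimTerm p • ε (p.1 + p.2)) := by
    refine (hasSum_sum_antidiagonal hadd.hasSum).congr_fun fun k => ?_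
    rw [← sum_antidiagonal_tornheimTerm, sum_smul]
    exact sum_congr rfl fun p hp => by rw [mem_antidiagonal.mp hp]
  have difference : HasSum (fun n : ℕ => ((n : ℝ) ^ 3)⁻¹ • ε n)
      (∑' p : ℕ × ℕ, tornheimTerm p • ε p.1 -
        (1 / 2 : ℝ) • ∑' p : ℕ × ℕ, tornheimTerm p • ε (p.1 + p.2)) :=
    (by_fst.sub (by_add.const_smul (1 / 2 : ℝ))).congr_fun fun n => by module
  rw [difference.tsum_eq, add_sub_cancel]

theorem tsum_tornheimTerm : ∑' p, tornheimTerm p = 2 * ∑' n : ℕ, ((n : ℝ) ^ 3)⁻¹ := by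
  have h := tsum_tornheimTerm_smul_fst (ε := fun _ => (1 : ℝ))
    (by simpa using summable_tornheimTerm) (by simpa using summable_tornheimTerm)
  simp only [smul_eq_mul, mul_one] at h
  linarith

theorem tsum_tornheimTerm_mul_neg_one_pow_fst :
    ∑' p : ℕ × ℕ, tornheimTerm p * (-1) ^ p.1 =
      1 / 2 * ∑' p : ℕ × ℕ, tornheimTerm p * (-1) ^ (p.1 + p.2) -
        3 / 4 * ∑' n : ℕ, ((n : ℝ) ^ 3)⁻¹ := by
  have h := tsum_tornheimTerm_smul_fst (ε := fun n => (-1 : ℝ) ^ n)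
    (summable_mul_neg_one_pow summable_tornheimTerm _)
    (summable_mul_neg_one_pow summable_tornheimTerm _)
  simp only [smul_eq_mul] at h
  rw [h, tsum_inv_pow_mul_neg_one_pow (by norm_num)]
  ring

theorem tsum_tornheimTerm_mul_neg_one_pow_snd :
    ∑' p : ℕ × ℕ, tornheimTerm p * (-1) ^ p.2 = ∑' p : ℕ × ℕ, tornheimTerm p * (-1) ^ p.1 := by
  rw [← (Equiv.prodComm ℕ ℕ).tsum_eq]
  exact tsum_congr fun p => by
    simp only [Equiv.prodComm_apply, tornheimTerm_swap, Prod.snd_swap]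

theorem tsum_tornheimTerm_parity :
    ∑' p, tornheimTerm p + ∑' p : ℕ × ℕ, tornheimTerm p * (-1) ^ (p.1 + p.2) +
        2 * ∑' p : ℕ × ℕ, tornheimTerm p * (-1) ^ p.1 =
      1 / 2 * ∑' p, tornheimTerm p := by
  have hs := summable_tornheimTerm
  have hs_signed := summable_mul_neg_one_pow hs
  have even_part := tsum_prod_mul_one_add_neg_one_pow tornheimTerm
  have expand (p : ℕ × ℕ) : tornheimTerm p * ((1 + (-1) ^ p.1) * (1 + (-1) ^ p.2)) =
      tornheimTerm p + tornheimTerm p * (-1) ^ (p.1 + p.2) +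
        (tornheimTerm p * (-1) ^ p.1 + tornheimTerm p * (-1) ^ p.2) := by ring
  simp only [expand, tornheimTerm_mul_mul, tsum_mul_left] at even_part
  rw [(hs.add (hs_signed _)).tsum_add ((hs_signed _).add (hs_signed _)), hs.tsum_add (hs_signed _),
    (hs_signed _).tsum_add (hs_signed _), tsum_tornheimTerm_mul_neg_one_pow_snd] at even_part
  push_cast at even_part
  linear_combination even_part

theorem tsum_tornheimTerm_mul_neg_one_pow_add :
    ∑' p : ℕ × ℕ, tornheimTerm p * (-1) ^ (p.1 + p.2) = 1 / 4 * ∑' n : ℕ, ((n : ℝ) ^ 3)⁻¹ := by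
  linarith [tsum_tornheimTerm, tsum_tornheimTerm_mul_neg_one_pow_fst, tsum_tornheimTerm_parity]

/-- The alternating Mordell–Tornheim value
`T(1̄,1̄;1) = ∑_{m1,m2 ≥ 1} (-1)^{m1+m2}/(m1 m2 (m1+m2))` (as an iterated sum)
equals `(1/4) ζ(3)`. -/
theorem stmt_2 :
    (∑' m1 : ℕ+, ∑' m2 : ℕ+,
        (-1 : ℝ) ^ ((m1 : ℕ) + (m2 : ℕ)) / ((m1 : ℝ) * (m2 : ℝ) * ((m1 : ℝ) + (m2 : ℝ))))
      = (1 / 4) * ∑' n : ℕ+, 1 / (n : ℝ) ^ 3 := by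
  let f (m n : ℕ) : ℝ := tornheimTerm (m, n) * (-1) ^ (m + n)
  have f_zero_right (m : ℕ) : f m 0 = 0 := by simp [f, tornheimTerm]
  have f_zero_left : ∑' n, f 0 n = 0 := by simp [f, tornheimTerm]
  calc
    _ = ∑' m : ℕ+, ∑' n : ℕ+, f m n := by
      simp only [f, tornheimTerm, div_eq_inv_mul]
    _ = ∑' m, ∑' n, f m n := by
      simp only [tsum_pnat_of_apply_zero (f_zero_right _)]
      exact tsum_pnat_of_apply_zero (f := fun m => ∑' n, f m n) f_zero_left
    _ = ∑' p : ℕ × ℕ, tornheimTerm p * (-1) ^ (p.1 + p.2) :=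
      (summable_mul_neg_one_pow summable_tornheimTerm fun p => p.1 + p.2).tsum_prod.symm
    _ = 1 / 4 * ∑' n : ℕ, ((n : ℝ) ^ 3)⁻¹ := tsum_tornheimTerm_mul_neg_one_pow_add
    _ = 1 / 4 * ∑' n : ℕ+, 1 / (n : ℝ) ^ 3 := by
      rw [← tsum_pnat_of_apply_zero (f := fun n : ℕ => ((n : ℝ) ^ 3)⁻¹) (by simp)]
      simp only [one_div]
end

section
/- For every prime p ≥ 5, the sum ∑_{i+j+k=p, i,j,k>0} 1/(ijk) is congruent to -2·B_{p-3} modulo p, where the sum of unit fractions is interpreted in ℤ/pℤ (all denominators i,j,k are coprime to p since 0 < i,j,k < p) and B_{p-3} is the (p-3)rd Bernoulli number, whose denominator is coprime to p by the von Staudt–Clausen theorem. -/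
/-!
Since `i = -(j + k)` modulo `p`, the identity `1 / (jk) = (1 / (j + k)) (1 / j + 1 / k)` turns the
triple sum into `-2` times the double harmonic sum `∑_{j < n < p} 1 / (n² j)`. By Fermat this double
sum is `∑_{n < p} n ^ (p - 3) ∑_{j < n} j ^ (p - 2)`, and Faulhaber's formula, whose coefficients
are `p`-integral in this range, expands it into power sums over `ℤ/pℤ`. The only exponent which is
a multiple of `p - 1` belongs to the coefficient of `B_{p-3}`; all other power sums vanish.
-/

open Finset
open scoped Nat

section Reduction

/-- The rational numbers that can be reduced in `F`: the subring on which the cast `ℚ → F`, defined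
as `q.num / q.den` with the junk value `0` when `q.den` vanishes in `F`, is a ring homomorphism.
For `F = ZMod p` these are the `p`-integral rationals. -/
def reducibleRat (F : Type*) [DivisionRing F] : Subring ℚ where
  carrier := {q | (q.den : F) ≠ 0}
  one_mem' := by simp
  zero_mem' := by simp
  neg_mem' := by simp
  add_mem' {q r} hq hr := by
    have hqr : ((q.den * r.den : ℕ) : F) ≠ 0 := by simpa only [Nat.cast_mul] using mul_ne_zero hq hr
    exact ne_zero_of_dvd_ne_zero hqr (Nat.cast_dvd_cast (q.add_den_dvd r))
  mul_mem' {q r} hq hr := by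
    have hqr : ((q.den * r.den : ℕ) : F) ≠ 0 := by simpa only [Nat.cast_mul] using mul_ne_zero hq hr
    exact ne_zero_of_dvd_ne_zero hqr (Nat.cast_dvd_cast (q.mul_den_dvd r))

variable {F : Type*} [DivisionRing F]

theorem inv_natCast_mem_reducibleRat {n : ℕ} (hn : (n : F) ≠ 0) : (n : ℚ)⁻¹ ∈ reducibleRat F := by
  have hn' : n ≠ 0 := fun h => hn (by rw [h, Nat.cast_zero])
  change (((n : ℚ)⁻¹).den : F) ≠ 0
  rwa [Rat.inv_natCast_den, if_neg hn']

theorem div_natCast_mem_reducibleRat {q : ℚ} (hq : q ∈ reducibleRat F) {n : ℕ}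
    (hn : (n : F) ≠ 0) : q / n ∈ reducibleRat F :=
  div_eq_mul_inv q n ▸ mul_mem hq (inv_natCast_mem_reducibleRat hn)

theorem cast_mul_natCast_div_natCast {q : ℚ} (hq : q ∈ reducibleRat F) (c : ℕ) {d : ℕ}
    (hd : (d : F) ≠ 0) : ((q * c / d : ℚ) : F) = q * c / d := by
  rw [Rat.cast_div_of_ne_zero (mul_mem hq (natCast_mem _ c)) (by simpa using hd),
    Rat.cast_mul_of_ne_zero hq (by simp), Rat.cast_natCast, Rat.cast_natCast]

theorem cast_sum_of_mem_reducibleRat {ι : Type*} {s : Finset ι} {f : ι → ℚ}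
    (hf : ∀ i ∈ s, f i ∈ reducibleRat F) : ((∑ i ∈ s, f i : ℚ) : F) = ∑ i ∈ s, (f i : F) := by
  induction s using Finset.cons_induction with
  | empty => simp
  | cons a s ha ih =>
    have hs : ∀ i ∈ s, f i ∈ reducibleRat F := fun i hi => hf i (mem_cons_of_mem hi)
    rw [sum_cons, sum_cons, ← ih hs]
    exact Rat.cast_add_of_ne_zero (hf a (mem_cons_self a s)) (sum_mem hs)

theorem natCast_ne_zero_of_factorial_ne_zero {n k : ℕ} (hn : (n ! : F) ≠ 0) (hk : 0 < k)
    (hkn : k ≤ n) : (k : F) ≠ 0 :=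
  ne_zero_of_dvd_ne_zero hn (Nat.cast_dvd_cast (Nat.dvd_factorial hk hkn))

theorem bernoulli'_mem_reducibleRat {m : ℕ} (hm : ((m + 1)! : F) ≠ 0) :
    bernoulli' m ∈ reducibleRat F := by
  induction m using Nat.strong_induction_on with
  | _ m ih =>
    rw [bernoulli'_def]
    refine sub_mem (one_mem _) (sum_mem fun k hk => ?_)
    have hkm : k < m := mem_range.1 hk
    have hden : (m - k + 1 : ℚ) = (m - k + 1 : ℕ) := by
      rw [Nat.cast_add_one, Nat.cast_sub hkm.le]
    have hk_fact : ((k + 1)! : F) ≠ 0 :=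
      ne_zero_of_dvd_ne_zero hm (Nat.cast_dvd_cast (Nat.factorial_dvd_factorial (by lia)))
    rw [hden]
    exact mul_mem (div_natCast_mem_reducibleRat (natCast_mem _ _)
      (natCast_ne_zero_of_factorial_ne_zero hm (by lia) (by lia))) (ih k hkm hk_fact)

theorem bernoulli_mem_reducibleRat {m : ℕ} (hm : ((m + 1)! : F) ≠ 0) :
    bernoulli m ∈ reducibleRat F :=
  mul_mem (pow_mem (neg_mem (one_mem _)) m) (bernoulli'_mem_reducibleRat hm)

theorem sum_range_pow_of_factorial_ne_zero (n : ℕ) {m : ℕ} (hm : ((m + 1)! : F) ≠ 0) :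
    ∑ k ∈ range n, (k : F) ^ m = ∑ i ∈ range (m + 1),
      (bernoulli i : F) * (m + 1).choose i * (n : F) ^ (m + 1 - i) / (m + 1) := by
  have hm1 : ((m + 1 : ℕ) : F) ≠ 0 := natCast_ne_zero_of_factorial_ne_zero hm m.succ_pos le_rfl
  have hB : ∀ i ∈ range (m + 1), bernoulli i ∈ reducibleRat F := fun i hi =>
    bernoulli_mem_reducibleRat (ne_zero_of_dvd_ne_zero hm
      (Nat.cast_dvd_cast (Nat.factorial_dvd_factorial (by simpa using hi))))
  have hcoeff (i : ℕ) : bernoulli i * (m + 1).choose i * (n : ℚ) ^ (m + 1 - i) / (m + 1) =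
      bernoulli i * ((m + 1).choose i * n ^ (m + 1 - i) : ℕ) / (m + 1 : ℕ) := by
    push_cast
    ring
  calc ∑ k ∈ range n, (k : F) ^ m
      = ((∑ k ∈ range n, (k : ℚ) ^ m : ℚ) : F) := by
        rw [cast_sum_of_mem_reducibleRat fun k _ => pow_mem (natCast_mem _ k) m]
        exact sum_congr rfl fun k _ => by rw [← Nat.cast_pow, ← Nat.cast_pow, Rat.cast_natCast]
    _ = ∑ i ∈ range (m + 1),
          ((bernoulli i * ((m + 1).choose i * n ^ (m + 1 - i) : ℕ) / (m + 1 : ℕ) : ℚ) : F) := by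
        simp only [sum_range_pow, hcoeff]
        exact cast_sum_of_mem_reducibleRat fun i hi =>
          div_natCast_mem_reducibleRat (mul_mem (hB i hi) (natCast_mem _ _)) hm1
    _ = _ := sum_congr rfl fun i hi => by
        rw [cast_mul_natCast_div_natCast (hB i hi) _ hm1]
        simp only [Nat.cast_mul, Nat.cast_pow, Nat.cast_add_one, mul_assoc]

end Reduction

section FiniteField

variable {K : Type*} [Field K] [Fintype K]

theorem sum_pow_eq_ite_card_sub_one_dvd {e : ℕ} (he : e ≠ 0) :
    ∑ a : K, a ^ e = if Fintype.card K - 1 ∣ e then -1 else 0 := by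
  classical
  rw [← FiniteField.sum_pow_units K e, ← Fintype.sum_subtype_add_sum_subtype (· ≠ (0 : K)),
    ← unitsEquivNeZero.sum_comp]
  have hzero : ∑ a : {a : K // ¬a ≠ 0}, (a : K) ^ e = 0 :=
    sum_eq_zero fun a _ => by rw [not_not.1 a.2, zero_pow he]
  simp only [hzero, add_zero, unitsEquivNeZero_apply_coe]

theorem inv_pow_eq_pow_card_sub_one_sub {b : ℕ} (hb : b ≠ 0) (hbK : b < Fintype.card K - 1)
    (a : K) : a⁻¹ ^ b = a ^ (Fintype.card K - 1 - b) := by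
  rcases eq_or_ne a 0 with rfl | ha
  · rw [inv_zero, zero_pow hb, zero_pow (by lia)]
  · rw [inv_pow]
    refine inv_eq_of_mul_eq_one_right ?_
    rw [← pow_add, Nat.add_sub_of_le hbK.le, FiniteField.pow_card_sub_one_eq_one a ha]

end FiniteField

section HarmonicSums

theorem sum_Ico_inv_mul_sub {F : Type*} [Field F] {n : ℕ} (hn : (n ! : F) ≠ 0) :
    ∑ j ∈ Ico 1 n, ((j : F) * (n - j : ℕ))⁻¹ = 2 * (n : F)⁻¹ * ∑ j ∈ range n, (j : F)⁻¹ := by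
  rcases n.eq_zero_or_pos with rfl | hpos
  · simp
  have hterm : ∀ j ∈ Ico 1 n,
      ((j : F) * (n - j : ℕ))⁻¹ = (n : F)⁻¹ * ((j : F)⁻¹ + ((n - j : ℕ) : F)⁻¹) := fun j hj => by
    obtain ⟨hj1, hjn⟩ := mem_Ico.1 hj
    have hn0 := natCast_ne_zero_of_factorial_ne_zero hn hpos le_rfl
    have hj0 := natCast_ne_zero_of_factorial_ne_zero hn hj1 hjn.le
    have hk0 := natCast_ne_zero_of_factorial_ne_zero hn (Nat.sub_pos_of_lt hjn) (n.sub_le j)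
    have hadd : (j : F) + (n - j : ℕ) = n := by rw [← Nat.cast_add, Nat.add_sub_of_le hjn.le]
    field_simp
    rw [add_comm, hadd]
  have hreflect : ∑ j ∈ Ico 1 n, ((n - j : ℕ) : F)⁻¹ = ∑ j ∈ Ico 1 n, (j : F)⁻¹ := by
    simpa using sum_Ico_reflect (fun j : ℕ => (j : F)⁻¹) 1 (Nat.le_succ n)
  have hrange : ∑ j ∈ range n, (j : F)⁻¹ = ∑ j ∈ Ico 1 n, (j : F)⁻¹ := by
    simp [sum_range_eq_add_Ico _ hpos]
  rw [sum_congr rfl hterm, ← mul_sum, sum_add_distrib, hreflect, hrange]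
  ring

theorem sum_triples_eq_sum_sum_Ico {M : Type*} [AddCommMonoid M] (n : ℕ) (f : ℕ × ℕ × ℕ → M) :
    ∑ x ∈ (range (n + 1) ×ˢ range (n + 1) ×ˢ range (n + 1)).filter (fun x : ℕ × ℕ × ℕ =>
        x.1 + x.2.1 + x.2.2 = n ∧ 0 < x.1 ∧ 0 < x.2.1 ∧ 0 < x.2.2), f x =
      ∑ m ∈ range n, ∑ j ∈ Ico 1 m, f (n - m, j, m - j) := by
  rw [sum_sigma']
  refine sum_bij' (fun x _ => ⟨x.2.1 + x.2.2, x.2.1⟩) (fun y _ => (n - y.1, y.2, y.1 - y.2))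
    ?_ ?_ ?_ ?_ ?_
  all_goals
    simp only [mem_filter, mem_product, mem_range, mem_sigma, mem_Ico]
    grind

variable {p : ℕ} [Fact p.Prime]

theorem factorial_ne_zero_zmod_iff {n : ℕ} : (n ! : ZMod p) ≠ 0 ↔ n < p := by
  rw [← isUnit_iff_ne_zero, IsUnit.natCast_factorial_iff_of_charP p]

theorem sum_range_natCast_zmod {M : Type*} [AddCommMonoid M] (f : ZMod p → M) :
    ∑ n ∈ range p, f n = ∑ a : ZMod p, f a :=
  sum_bij' (fun n _ => (n : ZMod p)) (fun a _ => a.val) (fun _ _ => mem_univ _)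
    (fun a _ => mem_range.2 a.val_lt) (fun _ hn => ZMod.val_cast_of_lt (mem_range.1 hn))
    (fun a _ => a.natCast_zmod_val) (fun _ _ => rfl)

theorem choose_prime_sub_one {k : ℕ} (hk : k < p) : ((p - 1).choose k : ZMod p) = (-1) ^ k := by
  induction k with
  | zero => simp
  | succ k ih =>
    have hpascal : (((p - 1).choose k + (p - 1).choose (k + 1) : ℕ) : ZMod p) = 0 := by
      rw [← Nat.choose_succ_succ', Nat.sub_add_cancel (by lia), ZMod.natCast_eq_zero_iff]
      exact (Fact.out : p.Prime).dvd_choose_self k.succ_ne_zero hk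
    rw [Nat.cast_add, ih (by lia)] at hpascal
    rw [eq_neg_of_add_eq_zero_right hpascal, pow_succ, mul_neg_one]

theorem sum_range_pow_mul_sum_range_pow {a m : ℕ} (ha : a + 1 < p) (hm : m + 1 < p)
    (ham : p ≤ a + m + 2) :
    ∑ n ∈ range p, (n : ZMod p) ^ a * ∑ j ∈ range n, (j : ZMod p) ^ m =
      -((bernoulli (a + m + 2 - p) : ZMod p) * (m + 1).choose (a + m + 2 - p) / (m + 1)) := by
  have hpow : ∀ i ∈ range (m + 1), ∑ n ∈ range p, (n : ZMod p) ^ (a + (m + 1 - i)) =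
      if i = a + m + 2 - p then -1 else 0 := fun i hi => by
    have hi' := mem_range.1 hi
    rw [sum_range_natCast_zmod (· ^ (a + (m + 1 - i))),
      sum_pow_eq_ite_card_sub_one_dvd (by lia), ZMod.card]
    have hdvd_iff : p - 1 ∣ a + (m + 1 - i) ↔ i = a + m + 2 - p := by
      constructor
      · intro hdvd
        have heq : a + (m + 1 - i) = p - 1 :=
          Nat.eq_of_dvd_of_lt_two_mul (by lia) hdvd (by lia)
        lia
      · rintro rfl
        exact dvd_of_eq (by lia)
    simp only [hdvd_iff]
  calc ∑ n ∈ range p, (n : ZMod p) ^ a * ∑ j ∈ range n, (j : ZMod p) ^ m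
      = ∑ i ∈ range (m + 1), (bernoulli i : ZMod p) * (m + 1).choose i / (m + 1) *
          ∑ n ∈ range p, (n : ZMod p) ^ (a + (m + 1 - i)) := by
        simp only [sum_range_pow_of_factorial_ne_zero _ (factorial_ne_zero_zmod_iff.2 hm), mul_sum]
        rw [sum_comm]
        refine sum_congr rfl fun i _ => sum_congr rfl fun n _ => ?_
        rw [pow_add]
        ring
    _ = _ := by
        rw [sum_congr rfl fun i hi => by rw [hpow i hi]]
        simp only [mul_ite, mul_neg_one, mul_zero]
        rw [sum_ite_eq', if_pos (mem_range.2 (by lia))]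

theorem sum_inv_pow_mul_sum_inv_pow {b c : ℕ} (hb : b ≠ 0) (hc : c ≠ 0) (hbc : b + c < p) :
    ∑ n ∈ range p, (n : ZMod p)⁻¹ ^ b * ∑ j ∈ range n, (j : ZMod p)⁻¹ ^ c =
      (bernoulli (p - b - c) : ZMod p) * (p - c).choose b / c := by
  have hinv {e : ℕ} (he : e ≠ 0) (hep : e < p - 1) (x : ZMod p) : x⁻¹ ^ e = x ^ (p - 1 - e) := by
    simpa only [ZMod.card] using inv_pow_eq_pow_card_sub_one_sub (K := ZMod p) he (by simpa) x
  have hchoose : (p - c).choose (p - b - c) = (p - c).choose b := by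
    rw [← Nat.choose_symm (by lia), show p - c - (p - b - c) = b by lia]
  have hden : ((p - 1 - c : ℕ) : ZMod p) + 1 = -c := by
    rw [← Nat.cast_add_one, show p - 1 - c + 1 = p - c by lia, Nat.cast_sub (by lia)]
    simp
  simp only [hinv hb (by lia), hinv hc (by lia)]
  rw [sum_range_pow_mul_sum_range_pow (by lia) (by lia) (by lia), hden,
    show p - 1 - b + (p - 1 - c) + 2 - p = p - b - c by lia,
    show p - 1 - c + 1 = p - c by lia, hchoose, div_neg, neg_neg]

theorem sum_inv_sq_mul_sum_inv (hp : 3 < p) :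
    ∑ n ∈ range p, (n : ZMod p)⁻¹ ^ 2 * ∑ j ∈ range n, (j : ZMod p)⁻¹ = bernoulli (p - 3) := by
  simpa [choose_prime_sub_one (show 2 < p by lia), Nat.sub_sub] using
    sum_inv_pow_mul_sum_inv_pow (p := p) two_ne_zero one_ne_zero hp

theorem sum_inv_triples_eq_neg_two_mul :
    ∑ x ∈ (range (p + 1) ×ˢ range (p + 1) ×ˢ range (p + 1)).filter (fun x : ℕ × ℕ × ℕ =>
        x.1 + x.2.1 + x.2.2 = p ∧ 0 < x.1 ∧ 0 < x.2.1 ∧ 0 < x.2.2),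
        ((x.1 : ZMod p) * (x.2.1 : ZMod p) * (x.2.2 : ZMod p))⁻¹ =
      -2 * ∑ n ∈ range p, (n : ZMod p)⁻¹ ^ 2 * ∑ j ∈ range n, (j : ZMod p)⁻¹ := by
  rw [sum_triples_eq_sum_sum_Ico, mul_sum]
  refine sum_congr rfl fun n hn => ?_
  have hnp : n < p := mem_range.1 hn
  have hneg : ((p - n : ℕ) : ZMod p) = -n := by
    rw [Nat.cast_sub hnp.le, ZMod.natCast_self, zero_sub]
  calc ∑ j ∈ Ico 1 n, (((p - n : ℕ) : ZMod p) * j * (n - j : ℕ))⁻¹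
      = -(n : ZMod p)⁻¹ * ∑ j ∈ Ico 1 n, ((j : ZMod p) * (n - j : ℕ))⁻¹ := by
        simp only [hneg, mul_sum, mul_assoc, mul_inv (-(n : ZMod p)), inv_neg]
    _ = -2 * ((n : ZMod p)⁻¹ ^ 2 * ∑ j ∈ range n, (j : ZMod p)⁻¹) := by
        rw [sum_Ico_inv_mul_sub (factorial_ne_zero_zmod_iff.2 hnp)]
        ring

end HarmonicSums

/-- For every prime `p ≥ 5`,
`∑_{i+j+k=p, i,j,k>0} 1/(ijk) ≡ -2 B_{p-3} (mod p)`, interpreted in `ℤ/pℤ`. -/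
theorem stmt_6 (p : ℕ) [Fact p.Prime] (hp : 5 ≤ p) :
    (∑ x ∈ (Finset.range (p + 1) ×ˢ Finset.range (p + 1) ×ˢ
        Finset.range (p + 1)).filter
        (fun x : ℕ × ℕ × ℕ =>
          x.1 + x.2.1 + x.2.2 = p ∧ 0 < x.1 ∧ 0 < x.2.1 ∧ 0 < x.2.2),
        ((x.1 : ZMod p) * (x.2.1 : ZMod p) * (x.2.2 : ZMod p))⁻¹)
      = ((-2 * bernoulli (p - 3) : ℚ) : ZMod p) := by
  have hB : bernoulli (p - 3) ∈ reducibleRat (ZMod p) :=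
    bernoulli_mem_reducibleRat (factorial_ne_zero_zmod_iff.2 (by lia))
  have hcast : ((-2 * bernoulli (p - 3) : ℚ) : ZMod p) = -2 * bernoulli (p - 3) := by
    rw [Rat.cast_mul_of_ne_zero (by simp) hB, Rat.cast_neg, Rat.cast_ofNat]
  rw [sum_inv_triples_eq_neg_two_mul, sum_inv_sq_mul_sum_inv (by lia), hcast]
end

section
/- Let p be a prime and α, β, γ positive integers with p > α+β+γ and α+β+γ even. Then for every r ≥ 1, Z_{p^r}(α,β,γ) ≡ p^{2r-2} Z_p(α,β,γ) (mod p^{2r}), as a congruence of p-integral rational numbers. -/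
/-- `Z_N(α,β,γ) = ∑_{k1+k2+k3=N, p∤k1k2k3, ki>0} 1/(k1^α k2^β k3^γ)`. -/
def Z3 (p N α β γ : ℕ) : ℚ :=
  ∑ k ∈ (Finset.range (N + 1) ×ˢ Finset.range (N + 1) ×ˢ
      Finset.range (N + 1)).filter
      (fun k : ℕ × ℕ × ℕ => k.1 + k.2.1 + k.2.2 = N ∧
        0 < k.1 ∧ ¬ p ∣ k.1 ∧ 0 < k.2.1 ∧ ¬ p ∣ k.2.1 ∧ 0 < k.2.2 ∧ ¬ p ∣ k.2.2),
    1 / ((k.1 : ℚ) ^ α * (k.2.1 : ℚ) ^ β * (k.2.2 : ℚ) ^ γ)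

/-!
Writing `N = p ^ r`, reduce a triple `k` of naturals prime to `p` with sum `p * N` modulo `N`. The
residues `a` lie in `(0, N)` and sum to `N` or `2 * N`; in the second case replace `a` by `N - a`,
which changes `∏ i, k i ^ (-e i)` by the sign `(-1) ^ ∑ i, e i = 1`. This writes `Z_{pN}` as a sum
over the triples `a` prime to `p` with sum `N` of the function `y ↦ ∏ i, (a i + N * y i) ^ (-e i)`,
summed over certain points `y ∈ ℤ³`. Modulo `p ^ (2 * r + 2)` we have `N ^ 4 = 0`, so each factor is
a polynomial in `N * y i`; expand it in the terms `N ^ u * (y i).choose u`. By Vandermonde's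
convolution the sum of `∏ i, (y i).choose (u i)` over these points is `p ^ 2` for `u = 0`, vanishes
for `∑ i, u i = 1`, and `12` times it is divisible by `p ^ 2` for `∑ i, u i = 2, 3`. As
`N ^ 2 * p ^ 2 = 0` as well and `12` is invertible, only `u = 0` survives: `Z_{pN} ≡ p ^ 2 * Z_N`.
-/

open Finset Polynomial

section Binomial

variable {ι : Type*} [Fintype ι] [DecidableEq ι]

theorem coeff_prod_eq_sum_piAntidiag {R : Type*} [CommSemiring R] (f : ι → PowerSeries R) (n : ℕ) :
    PowerSeries.coeff n (∏ i, f i) =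
      ∑ x ∈ piAntidiag univ n, ∏ i, PowerSeries.coeff (x i) (f i) := by
  rw [PowerSeries.coeff_prod]
  exact sum_equiv Finsupp.equivFunOnFinite (by simp) (by simp)

theorem sum_piAntidiag_prod_add_choose {d : ℕ} (hd : Fintype.card ι = d + 1) (u : ι → ℕ) (n : ℕ) :
    ∑ x ∈ piAntidiag univ n, ∏ i, (x i + u i).choose (u i) =
      (n + ∑ i, u i + d).choose (∑ i, u i + d) := by
  have h := coeff_prod_eq_sum_piAntidiag
    (fun i => (PowerSeries.mk 1 : PowerSeries ℤ) ^ (u i + 1)) n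
  rw [prod_pow_eq_pow_sum, sum_add_distrib, ← card_eq_sum_ones, card_univ, hd, ← add_assoc] at h
  simp only [PowerSeries.mk_one_pow_eq_mk_choose_add, PowerSeries.coeff_mk] at h
  simp only [add_comm (u _)] at h
  rw [show n + ∑ i, u i + d = ∑ i, u i + d + n by ring]
  exact_mod_cast h.symm

theorem coeff_X_pow_mul_mk_one_pow {R : Type*} [CommRing R] {v e : ℕ} (hve : v ≤ e) (m : ℕ) :
    PowerSeries.coeff (R := R) m (PowerSeries.X ^ v * PowerSeries.mk 1 ^ (e + 1)) =
      (m + (e - v)).choose e := by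
  rw [PowerSeries.coeff_X_pow_mul', PowerSeries.mk_one_pow_eq_mk_choose_add, PowerSeries.coeff_mk]
  split_ifs with hv
  · congr 2
    omega
  · rw [Nat.choose_eq_zero_of_lt (by omega), Nat.cast_zero]

theorem sum_piAntidiag_prod_choose {d : ℕ} (hd : Fintype.card ι = d + 1) (u : ι → ℕ) (n : ℕ) :
    ∑ x ∈ piAntidiag univ n, ∏ i, (x i).choose (u i) = (n + d).choose (∑ i, u i + d) := by
  have h := coeff_prod_eq_sum_piAntidiag
    (fun i => PowerSeries.X ^ u i * (PowerSeries.mk 1 : PowerSeries ℤ) ^ (u i + 1)) n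
  rw [prod_mul_distrib, prod_pow_eq_pow_sum, prod_pow_eq_pow_sum, sum_add_distrib,
    ← card_eq_sum_ones, card_univ, hd, ← add_assoc,
    coeff_X_pow_mul_mk_one_pow (Nat.le_add_right _ _), Nat.add_sub_cancel_left] at h
  simp only [coeff_X_pow_mul_mk_one_pow le_rfl, Nat.sub_self, add_zero] at h
  exact_mod_cast h.symm

theorem ringChoose_neg_add_one (x u : ℕ) :
    Ring.choose (-(x + 1) : ℤ) u = (-1) ^ u * ((x + u).choose u : ℤ) := by
  rw [Ring.choose_neg, ← Ring.choose_natCast, add_right_comm, add_sub_cancel_right]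
  simp [Int.negOnePow, Units.smul_def]

end Binomial

/-- The sum of `f` over the `y ∈ ℤ³` with either all `y i ≥ 0` and `∑ y i = n + 1`, or all
`y i < 0` and `∑ y i = -(n + 3)`. For `n + 2 = p` these `y` index the translates `a + N * y` of a
triple `a` with sum `N` which, up to sign, are triples of positive integers with sum `p * N`. -/
def translateSum {R : Type*} [AddCommMonoid R] (n : ℕ) (f : (Fin 3 → ℤ) → R) : R :=
  ∑ x ∈ piAntidiag univ (n + 1), f (fun i => x i) +
    ∑ x ∈ piAntidiag univ n, f (fun i => -(x i + 1))

theorem translateSum_prod_choose (n : ℕ) (u : Fin 3 → ℕ) :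
    translateSum n (fun y => ∏ i, Ring.choose (y i) (u i)) =
      ((n + 3).choose (∑ i, u i + 2) : ℤ) +
        (-1) ^ (∑ i, u i) * (n + ∑ i, u i + 2).choose (∑ i, u i + 2) := by
  simp only [translateSum, Ring.choose_natCast, ringChoose_neg_add_one, prod_mul_distrib,
    prod_pow_eq_pow_sum, ← mul_sum]
  congr 1
  · exact_mod_cast sum_piAntidiag_prod_choose (Fintype.card_fin 3) u (n + 1)
  · congr 1
    exact_mod_cast sum_piAntidiag_prod_add_choose (Fintype.card_fin 3) u n

theorem translateSum_prod_choose_of_sum_eq_zero (n : ℕ) {u : Fin 3 → ℕ} (hu : ∑ i, u i = 0) :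
    translateSum n (fun y => ∏ i, Ring.choose (y i) (u i)) = ((n : ℤ) + 2) ^ 2 := by
  rw [translateSum_prod_choose, hu, ← Int.cast_inj (α := ℚ)]
  push_cast [Nat.cast_choose_two]
  ring

theorem translateSum_prod_choose_of_sum_eq_one (n : ℕ) {u : Fin 3 → ℕ} (hu : ∑ i, u i = 1) :
    translateSum n (fun y => ∏ i, Ring.choose (y i) (u i)) = 0 := by
  rw [translateSum_prod_choose, hu]
  ring_nf

theorem twelve_mul_choose_four_add_choose_four (n : ℕ) :
    12 * ((n + 3).choose 4 + (n + 4).choose 4) = (n + 1) * (n + 2) ^ 2 * (n + 3) := by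
  have h₁ := Nat.descFactorial_eq_factorial_mul_choose (n + 3) 4
  have h₂ := Nat.descFactorial_eq_factorial_mul_choose (n + 4) 4
  simp only [Nat.descFactorial_succ, Nat.descFactorial_zero, Nat.factorial, Nat.add_sub_cancel,
    Nat.reduceSubDiff, Nat.sub_zero] at h₁ h₂
  linarith

theorem sq_dvd_twelve_mul_translateSum_prod_choose (n : ℕ) {u : Fin 3 → ℕ}
    (hu : ∑ i, u i = 2 ∨ ∑ i, u i = 3) :
    ((n : ℤ) + 2) ^ 2 ∣ 12 * translateSum n (fun y => ∏ i, Ring.choose (y i) (u i)) := by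
  have h : (12 * ((n + 3).choose 4 + (n + 4).choose 4) : ℤ) = (n + 1) * (n + 2) ^ 2 * (n + 3) :=
    mod_cast twelve_mul_choose_four_add_choose_four n
  rw [translateSum_prod_choose]
  rcases hu with hu | hu <;> rw [hu]
  · exact ⟨(n + 1) * (n + 3), by linear_combination h⟩
  · refine ⟨-((n + 1) * (n + 3)), ?_⟩
    simp only [Nat.reduceAdd, Nat.choose_succ_succ' _ 4] at h ⊢
    push_cast
    linear_combination -h

theorem natCast_succ_mul_ringChoose_succ (y : ℤ) (u : ℕ) :
    ((u + 1 : ℕ) : ℤ) * Ring.choose y (u + 1) = (y - u) * Ring.choose y u := by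
  have h := Ring.choose_smul_choose y u.le_succ
  rwa [Nat.succ_sub u.le_refl, Nat.sub_self, Ring.choose_one_right, Nat.choose_succ_self_right,
    nsmul_eq_mul, mul_comm (Ring.choose y u)] at h

section Newton

variable {R : Type*} [CommRing R]

-- The truncated `u - 1` is harmless: the term `u = 0` carries the factor `u`.
theorem mul_sum_range_choose {N : R} {k : ℕ} (hN : N ^ k = 0) (d : ℕ → R) (y : ℤ) :
    N * y * ∑ u ∈ range k, d u * N ^ u * (Ring.choose y u : ℤ) =
      ∑ u ∈ range k, u * (d (u - 1) + N * d u) * N ^ u * (Ring.choose y u : ℤ) := by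
  have hshift : ∑ u ∈ range k, ((u + 1 : ℕ) : R) * d u * N ^ (u + 1) * (Ring.choose y (u + 1) : ℤ) =
      ∑ u ∈ range k, u * d (u - 1) * N ^ u * (Ring.choose y u : ℤ) := by
    simpa [hN] using (sum_range_succ' (fun u : ℕ =>
      (u : R) * d (u - 1) * N ^ u * (Ring.choose y u : ℤ)) k).symm.trans (sum_range_succ _ k)
  simp only [mul_add, add_mul, sum_add_distrib, ← hshift, mul_sum]
  rw [← sum_add_distrib]
  refine sum_congr rfl fun u _ => ?_
  have h := congrArg (Int.cast (R := R)) (natCast_succ_mul_ringChoose_succ y u)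
  push_cast at h ⊢
  linear_combination -d u * N ^ (u + 1) * h

theorem exists_eval_mul_eq_sum_choose {N : R} {k : ℕ} (hN : N ^ k = 0) (P : R[X]) :
    ∃ d : ℕ → R, ∀ y : ℤ,
      P.eval (N * y) = ∑ u ∈ range k, d u * N ^ u * (Ring.choose y u : ℤ) := by
  induction P using Polynomial.induction_on with
  | C a =>
    refine ⟨Pi.single 0 a, fun y => ?_⟩
    cases k with
    | zero =>
      have := subsingleton_of_zero_eq_one (by simpa using hN.symm)
      exact Subsingleton.elim _ _
    | succ k => simp [sum_range_succ']
  | add P Q hP hQ =>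
    obtain ⟨d, hd⟩ := hP
    obtain ⟨e, he⟩ := hQ
    exact ⟨d + e, fun y => by simp [hd, he, add_mul, sum_add_distrib]⟩
  | monomial m a h =>
    obtain ⟨d, hd⟩ := h
    refine ⟨fun u => u * (d (u - 1) + N * d u), fun y => ?_⟩
    rw [← mul_sum_range_choose hN, ← hd]
    simp only [eval_mul, eval_C, eval_X_pow]
    ring

theorem translateSum_prod_sum_choose (n : ℕ) (s : Finset ℕ) (d : Fin 3 → ℕ → R) :
    translateSum n (fun y => ∏ i, ∑ u ∈ s, d i u * (Ring.choose (y i) u : ℤ)) =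
      ∑ u ∈ Fintype.piFinset fun _ => s, (∏ i, d i (u i)) *
        (translateSum n fun y => ∏ i, Ring.choose (y i) (u i) : ℤ) := by
  simp only [translateSum, ← sum_prod_piFinset, prod_mul_distrib, Int.cast_add, Int.cast_sum,
    Int.cast_prod, mul_add, sum_add_distrib, mul_sum]
  congr 1 <;> exact sum_comm

theorem pow_sum_mul_translateSum_prod_choose {N : R} {n : ℕ} (h12 : IsUnit (12 : R))
    (hN4 : N ^ 4 = 0) (hN2 : N ^ 2 * (n + 2) ^ 2 = 0) {u : Fin 3 → ℕ} (hu : u ≠ 0) :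
    N ^ (∑ i, u i) * (translateSum n fun y => ∏ i, Ring.choose (y i) (u i) : ℤ) = 0 := by
  have hs : ∑ i, u i ≠ 0 := by simpa [funext_iff] using hu
  obtain hs | hs | hs : ∑ i, u i = 1 ∨ (∑ i, u i = 2 ∨ ∑ i, u i = 3) ∨ 4 ≤ ∑ i, u i := by omega
  · rw [translateSum_prod_choose_of_sum_eq_one n hs, Int.cast_zero, mul_zero]
  · obtain ⟨c, hc⟩ := sq_dvd_twelve_mul_translateSum_prod_choose n hs
    have hc := congrArg (Int.cast (R := R)) hc
    push_cast at hc
    have h2 : 2 ≤ ∑ i, u i := by omega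
    refine h12.mul_right_eq_zero.1 ?_
    rw [← Nat.add_sub_cancel' h2, pow_add]
    linear_combination N ^ 2 * N ^ (∑ i, u i - 2) * hc + N ^ (∑ i, u i - 2) * c * hN2
  · rw [pow_eq_zero_of_le hs hN4, zero_mul]

theorem translateSum_prod_eval {N : R} {n : ℕ} (h12 : IsUnit (12 : R)) (hN4 : N ^ 4 = 0)
    (hN2 : N ^ 2 * (n + 2) ^ 2 = 0) (P : Fin 3 → R[X]) :
    translateSum n (fun y => ∏ i, (P i).eval (N * y i)) = (n + 2) ^ 2 * ∏ i, (P i).eval 0 := by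
  choose d hd using fun i => exists_eval_mul_eq_sum_choose hN4 (P i)
  have hd0 (i : Fin 3) : (P i).eval 0 = d i 0 := by simpa [sum_range_succ'] using hd i 0
  simp only [hd, translateSum_prod_sum_choose n (range 4) fun i u => d i u * N ^ u]
  rw [sum_eq_single 0]
  · rw [translateSum_prod_choose_of_sum_eq_zero n (by simp)]
    simp [hd0, mul_comm]
  · intro u _ hu
    rw [prod_mul_distrib, prod_pow_eq_pow_sum, mul_assoc,
      pow_sum_mul_translateSum_prod_choose h12 hN4 hN2 hu, mul_zero]
  · simp

end Newton

section Residues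

variable {ι : Type*} [Fintype ι] {p N : ℕ}

theorem exists_sum_mod_eq_mul [Nonempty ι] (hN : 0 < N) {k : ι → ℕ} (hk : N ∣ ∑ i, k i)
    (hdvd : ∀ i, ¬ N ∣ k i) : ∃ m, 0 < m ∧ m < Fintype.card ι ∧ ∑ i, k i % N = m * N := by
  obtain ⟨m, hm⟩ : N ∣ ∑ i, k i % N := by
    rwa [Nat.dvd_iff_mod_eq_zero, ← sum_nat_mod, ← Nat.dvd_iff_mod_eq_zero]
  have hpos : 0 < ∑ i, k i % N :=
    sum_pos (fun i _ => Nat.emod_pos_of_not_dvd (hdvd i)) univ_nonempty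
  have hlt : ∑ i, k i % N < Fintype.card ι * N := by
    simpa using sum_lt_sum_of_nonempty univ_nonempty fun i _ => Nat.mod_lt (k i) hN
  rw [hm, mul_comm] at hlt hpos
  exact ⟨m, Nat.pos_of_mul_pos_right hpos, lt_of_mul_lt_mul_right hlt hN.le,
    hm.trans (mul_comm _ _)⟩

variable [DecidableEq ι]

/-- The tuples `k : ι → ℕ` with sum `N`, none of whose entries is divisible by `p`. The prime-to-`p`
condition excludes zero entries. -/
def primeToTuples (ι : Type*) [Fintype ι] [DecidableEq ι] (p N : ℕ) : Finset (ι → ℕ) :=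
  {k ∈ piAntidiag univ N | ∀ i, ¬ p ∣ k i}

/-- The tuples in `primeToTuples ι p (m * N)` with all entries in `[0, N)`: the possible tuples of
residues modulo `N` whose sum is `m * N`. -/
def residueTuples (ι : Type*) [Fintype ι] [DecidableEq ι] (p N m : ℕ) : Finset (ι → ℕ) :=
  {a ∈ primeToTuples ι p (m * N) | ∀ i, a i < N}

theorem mem_primeToTuples {k : ι → ℕ} :
    k ∈ primeToTuples ι p N ↔ ∑ i, k i = N ∧ ∀ i, ¬ p ∣ k i := by
  simp [primeToTuples]

theorem mem_residueTuples {m : ℕ} {a : ι → ℕ} :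
    a ∈ residueTuples ι p N m ↔ (∑ i, a i = m * N ∧ ∀ i, ¬ p ∣ a i) ∧ ∀ i, a i < N := by
  simp [residueTuples, mem_primeToTuples]

theorem residueTuples_one [Nontrivial ι] : residueTuples ι p N 1 = primeToTuples ι p N := by
  rw [residueTuples, one_mul, filter_eq_self]
  intro a ha i
  obtain ⟨hsum, hdvd⟩ := mem_primeToTuples.1 ha
  obtain ⟨j, hj⟩ := exists_ne i
  rw [← hsum]
  exact single_lt_sum hj (mem_univ i) (mem_univ j)
    (Nat.pos_of_ne_zero fun h => hdvd j (h ▸ dvd_zero p)) fun _ _ _ => Nat.zero_le _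

theorem sum_primeToTuples_filter_sum_mod {R : Type*} [AddCommMonoid R] (hpN : p ∣ N) (hN : 0 < N)
    (m n : ℕ) (F : (ι → ℕ) → R) :
    ∑ k ∈ primeToTuples ι p ((m + n) * N) with ∑ i, k i % N = m * N, F k =
      ∑ a ∈ residueTuples ι p N m, ∑ x ∈ piAntidiag univ n, F fun i => a i + N * x i := by
  rw [← sum_product']
  refine sum_nbij' (fun k => (fun i => k i % N, fun i => k i / N))
    (fun ax i => ax.1 i + N * ax.2 i) ?_ ?_ ?_ ?_ ?_
  · intro k hk
    obtain ⟨hk, hmod⟩ := mem_filter.1 hk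
    obtain ⟨hsum, hdvd⟩ := mem_primeToTuples.1 hk
    have hdiv : ∑ i, k i % N + N * ∑ i, k i / N = (m + n) * N := by
      rw [mul_sum, ← sum_add_distrib, ← hsum]
      exact sum_congr rfl fun i _ => Nat.mod_add_div _ _
    refine mem_product.2 ⟨mem_residueTuples.2 ⟨⟨hmod, fun i => ?_⟩, fun i => Nat.mod_lt _ hN⟩, ?_⟩
    · rw [Nat.dvd_mod_iff hpN]
      exact hdvd i
    · rw [mem_piAntidiag]
      exact ⟨Nat.eq_of_mul_eq_mul_left hN (by linarith), fun i _ => mem_univ i⟩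
  · rintro ⟨a, x⟩ hax
    obtain ⟨ha, hx⟩ := mem_product.1 hax
    obtain ⟨⟨hsum, hdvd⟩, hlt⟩ := mem_residueTuples.1 ha
    rw [mem_piAntidiag] at hx
    refine mem_filter.2 ⟨mem_primeToTuples.2 ⟨?_, fun i => ?_⟩, ?_⟩
    · rw [sum_add_distrib, ← mul_sum, hsum, hx.1]
      ring
    · rw [← Nat.dvd_add_iff_left (hpN.mul_right _)]
      exact hdvd i
    · simpa only [Nat.add_mul_mod_self_left, Nat.mod_eq_of_lt (hlt _)] using hsum
  · exact fun k _ => funext fun i => Nat.mod_add_div _ _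
  · rintro ⟨a, x⟩ hax
    have hlt := (mem_residueTuples.1 (mem_product.1 hax).1).2
    simp [Nat.mod_eq_of_lt (hlt _), Nat.add_mul_div_left _ _ hN, Nat.div_eq_of_lt (hlt _)]
  · exact fun k _ => congrArg F (funext fun i => (Nat.mod_add_div _ _).symm)

theorem sum_residueTuples_reflect {R : Type*} [AddCommMonoid R] (hpN : p ∣ N) {m m' : ℕ}
    (h : m + m' = Fintype.card ι) (F : (ι → ℕ) → R) :
    ∑ a ∈ residueTuples ι p N m', F a = ∑ a ∈ residueTuples ι p N m, F fun i => N - a i := by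
  have hmaps {m m' : ℕ} (h : m + m' = Fintype.card ι) {a : ι → ℕ}
      (ha : a ∈ residueTuples ι p N m) : (fun i => N - a i) ∈ residueTuples ι p N m' := by
    obtain ⟨⟨hsum, hdvd⟩, hlt⟩ := mem_residueTuples.1 ha
    refine mem_residueTuples.2 ⟨⟨?_, fun i => ?_⟩, fun i => ?_⟩
    · rw [sum_tsub_distrib _ fun i _ => (hlt i).le, hsum, sum_const, card_univ, ← h, smul_eq_mul,
        add_mul, Nat.add_sub_cancel_left]
    · rw [Nat.dvd_sub_iff_right (hlt i).le hpN]
      exact hdvd i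
    · have : a i ≠ 0 := fun h => hdvd i (h ▸ dvd_zero p)
      have := hlt i
      omega
  have hinv {m : ℕ} {a : ι → ℕ} (ha : a ∈ residueTuples ι p N m) :
      (fun i => N - (N - a i)) = a :=
    funext fun i => Nat.sub_sub_self ((mem_residueTuples.1 ha).2 i).le
  exact sum_nbij' (fun a i => N - a i) (fun a i => N - a i) (fun a => hmaps (add_comm m' m ▸ h))
    (fun a => hmaps h) (fun a => hinv) (fun a => hinv) fun a ha => congrArg F (hinv ha).symm

theorem sum_primeToTuples_mul {R : Type*} [AddCommMonoid R] (hpN : p ∣ N) (hN : 0 < N) (n : ℕ)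
    (F : (Fin 3 → ℕ) → R) :
    ∑ k ∈ primeToTuples (Fin 3) p ((n + 2) * N), F k =
      ∑ a ∈ primeToTuples (Fin 3) p N,
        (∑ x ∈ piAntidiag univ (n + 1), F (fun i => a i + N * x i) +
          ∑ x ∈ piAntidiag univ n, F fun i => N - a i + N * x i) := by
  have hmod {k} (hk : k ∈ primeToTuples (Fin 3) p ((n + 2) * N)) :
      ∑ i, k i % N = 2 * N ↔ ¬ ∑ i, k i % N = 1 * N := by
    obtain ⟨hsum, hdvd⟩ := mem_primeToTuples.1 hk
    obtain ⟨m, hm0, hm3, hm⟩ := exists_sum_mod_eq_mul hN (hsum ▸ Dvd.intro_left _ rfl)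
      fun i hi => hdvd i (hpN.trans hi)
    rw [Fintype.card_fin] at hm3
    rw [hm, Nat.mul_left_inj hN.ne', Nat.mul_left_inj hN.ne']
    omega
  have h₁ := sum_primeToTuples_filter_sum_mod hpN hN 1 (n + 1) F
  have h₂ := sum_primeToTuples_filter_sum_mod hpN hN 2 n F
  rw [add_left_comm, add_comm 1 1, residueTuples_one] at h₁
  rw [add_comm, sum_residueTuples_reflect hpN (m := 1) rfl, residueTuples_one,
    filter_congr fun k => hmod] at h₂
  rw [sum_add_distrib, ← h₁, ← h₂, sum_filter_add_sum_filter_not]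

end Residues

section PrimeToSum

variable {ι : Type*} [Fintype ι] [DecidableEq ι] {R S : Type*} [CommSemiring R] [CommSemiring S]
  {p N : ℕ}

/-- The sum of `∏ i, g (k i) ^ e i` over `k ∈ primeToTuples ι p N`. For `g k = 1 / k` and
`ι = Fin 3` this is the sum `Z_N` with exponents `e`; a general `g` allows inverses in other
rings. -/
def primeToSum (p N : ℕ) (g : ℕ → R) (e : ι → ℕ) : R :=
  ∑ k ∈ primeToTuples ι p N, ∏ i, g (k i) ^ e i

theorem primeToSum_congr {g g' : ℕ → R} (h : ∀ k, ¬ p ∣ k → g k = g' k) (e : ι → ℕ) :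
    primeToSum p N g e = primeToSum p N g' e :=
  sum_congr rfl fun k hk => prod_congr rfl fun i _ => by rw [h _ ((mem_primeToTuples.1 hk).2 i)]

theorem map_primeToSum (f : R →+* S) (g : ℕ → R) (e : ι → ℕ) :
    f (primeToSum p N g e) = primeToSum p N (f ∘ g) e := by
  simp only [primeToSum, map_sum, map_prod, map_pow, Function.comp_apply]

end PrimeToSum

section Congruence

variable {R : Type*} [CommRing R]

theorem exists_polynomial_eval_eq_pow {a : R} (ha : IsUnit a) (k e : ℕ) :
    ∃ P : R[X], ∀ t z, t ^ k = 0 → (a + t) * z = 1 → P.eval t = z ^ e := by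
  obtain ⟨b, hab⟩ := ha.exists_right_inv
  refine ⟨(C b * ∑ u ∈ range k, (-(C b * X)) ^ u) ^ e, fun t z ht hz => ?_⟩
  have hgeom := mul_neg_geom_sum (-(b * t)) k
  rw [neg_pow, mul_pow, ht, mul_zero, mul_zero, sub_zero] at hgeom
  have hinv : (a + t) * (b * ∑ u ∈ range k, (-(b * t)) ^ u) = 1 := by
    linear_combination hgeom + (∑ u ∈ range k, (-(b * t)) ^ u) * hab
  simp only [eval_pow, eval_mul, eval_C, eval_finsetSum, eval_neg, eval_X]
  rw [left_inv_eq_right_inv ((mul_comm _ _).trans hinv) hz]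

theorem sum_translates_prod_pow {p N n : ℕ} (hpN : p ∣ N) (h12 : IsUnit (12 : R))
    (hN4 : (N : R) ^ 4 = 0) (hN2 : (N : R) ^ 2 * (n + 2) ^ 2 = 0) {g : ℕ → R}
    (hg : ∀ k, ¬ p ∣ k → k * g k = 1) {e : Fin 3 → ℕ} (he : Even (∑ i, e i)) {a : Fin 3 → ℕ}
    (ha : ∀ i, ¬ p ∣ a i) (haN : ∀ i, a i ≤ N) :
    ∑ x ∈ piAntidiag univ (n + 1), ∏ i, g (a i + N * x i) ^ e i +
        ∑ x ∈ piAntidiag univ n, ∏ i, g (N - a i + N * x i) ^ e i =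
      (n + 2) ^ 2 * ∏ i, g (a i) ^ e i := by
  choose P hP using fun i =>
    exists_polynomial_eval_eq_pow (.of_mul_eq_one _ (hg _ (ha i))) 4 (e i)
  have hNy (y : ℤ) : ((N : R) * y) ^ 4 = 0 := by rw [mul_pow, hN4, zero_mul]
  have hzero (i : Fin 3) : (P i).eval 0 = g (a i) ^ e i :=
    hP i 0 _ (zero_pow four_ne_zero) (by rw [add_zero, hg _ (ha i)])
  have hpos (i : Fin 3) (x : ℕ) : (P i).eval (N * ((x : ℤ) : R)) = g (a i + N * x) ^ e i := by
    have hinv := hg (a i + N * x) (mt (Nat.dvd_add_iff_left (hpN.mul_right x)).2 (ha i))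
    push_cast at hinv
    exact hP i _ _ (hNy x) (mod_cast hinv)
  have hneg (i : Fin 3) (x : ℕ) :
      (P i).eval (N * ((-(x + 1) : ℤ) : R)) = (-g (N - a i + N * x)) ^ e i := by
    have hinv := hg (N - a i + N * x) (mt (Nat.dvd_add_iff_left (hpN.mul_right x)).2
      (mt (Nat.dvd_sub_iff_right (haN i) hpN).1 (ha i)))
    push_cast [haN i] at hinv
    refine hP i _ _ (hNy _) ?_
    push_cast
    linear_combination hinv
  have hsign (x : Fin 3 → ℕ) :
      ∏ i, (-g (N - a i + N * x i)) ^ e i = ∏ i, g (N - a i + N * x i) ^ e i := by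
    simp only [neg_pow (g _), prod_mul_distrib, prod_pow_eq_pow_sum, he.neg_one_pow, one_mul]
  simpa only [translateSum, hzero, hpos, hneg, hsign] using translateSum_prod_eval h12 hN4 hN2 P

theorem primeToSum_mul {p N : ℕ} (hp : p.Prime) (hp5 : 5 ≤ p) (hpN : p ∣ N)
    (hN : 0 < N) (hN4 : (N : R) ^ 4 = 0) (hN2 : (N : R) ^ 2 * p ^ 2 = 0) {g : ℕ → R}
    (hg : ∀ k, ¬ p ∣ k → k * g k = 1) {e : Fin 3 → ℕ} (he : Even (∑ i, e i)) :
    primeToSum p (p * N) g e = p ^ 2 * primeToSum p N g e := by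
  have hp12 : ¬ p ∣ 12 := fun h => by
    have hp6 : p ∣ 6 := hp.dvd_of_dvd_pow (h.trans (by decide : 12 ∣ 6 ^ 2))
    have hple := Nat.le_of_dvd (by decide) hp6
    interval_cases p
    · exact absurd hp6 (by decide)
    · exact absurd hp (by decide)
  have h12 : IsUnit (12 : R) := .of_mul_eq_one _ (mod_cast hg 12 hp12)
  obtain ⟨n, rfl⟩ := Nat.exists_eq_add_of_le' hp.two_le
  rw [primeToSum, primeToSum, sum_primeToTuples_mul hpN hN, mul_sum]
  refine sum_congr rfl fun a ha => ?_
  rw [← residueTuples_one] at ha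
  obtain ⟨⟨-, hdvd⟩, hlt⟩ := mem_residueTuples.1 ha
  push_cast at hN2 ⊢
  exact sum_translates_prod_pow hpN h12 hN4 hN2 hg he hdvd fun i => (hlt i).le

end Congruence

theorem Z3_eq_primeToSum (p N α β γ : ℕ) :
    Z3 p N α β γ = primeToSum p N (fun k => (k : ℚ)⁻¹) ![α, β, γ] := by
  refine sum_nbij' (fun k => ![k.1, k.2.1, k.2.2]) (fun k => (k 0, k 1, k 2)) ?_ ?_
    (fun _ _ => rfl) (fun k _ => (List.ofFn_inj.1 rfl)) ?_
  · rintro ⟨k₁, k₂, k₃⟩ hk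
    simp_all [mem_primeToTuples, Fin.sum_univ_three, Fin.forall_fin_succ]
  · intro k hk
    obtain ⟨hsum, hdvd⟩ := mem_primeToTuples.1 hk
    have hpos (i : Fin 3) : 0 < k i := Nat.pos_of_ne_zero fun h => hdvd i (h ▸ dvd_zero p)
    have hle (i : Fin 3) : k i < N + 1 := by
      rw [Nat.lt_succ_iff, ← hsum]
      exact single_le_sum_of_canonicallyOrdered (mem_univ i)
    rw [Fin.sum_univ_three] at hsum
    simp [hpos, hle, hdvd, hsum]
  · rintro ⟨k₁, k₂, k₃⟩ -
    simp [Fin.prod_univ_three]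

section Padic

variable {p : ℕ} [hp : Fact p.Prime]

theorem padicNorm_le_of_toZModPow_eq_zero {q : ℚ} {x : ℤ_[p]} (hx : (x : ℚ_[p]) = q) {n : ℕ}
    (hzero : PadicInt.toZModPow n x = 0) : padicNorm p q ≤ (p : ℚ) ^ (-n : ℤ) := by
  rw [← RingHom.mem_ker, PadicInt.ker_toZModPow, ← PadicInt.norm_le_pow_iff_mem_span_pow,
    PadicInt.norm_def, hx, Padic.eq_padicNorm] at hzero
  rw [← Rat.cast_le (K := ℝ)]
  push_cast
  exact hzero

theorem natCast_mul_padicInt_inv {k : ℕ} (hk : ¬ p ∣ k) : (k : ℤ_[p]) * (k : ℤ_[p]).inv = 1 :=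
  PadicInt.mul_inv
    (PadicInt.norm_natCast_eq_one_iff.2 ((Nat.Prime.coprime_iff_not_dvd hp.out).2 hk))

theorem coe_primeToSum_padicInt_inv (N α β γ : ℕ) :
    ((primeToSum p N (fun k => (k : ℤ_[p]).inv) ![α, β, γ] : ℤ_[p]) : ℚ_[p]) = Z3 p N α β γ := by
  rw [Z3_eq_primeToSum]
  refine (map_primeToSum PadicInt.Coe.ringHom _ _).trans
    ((primeToSum_congr (fun k hk => ?_) _).trans (map_primeToSum (Rat.castHom ℚ_[p]) _ _).symm)
  have hinv := congrArg PadicInt.Coe.ringHom (natCast_mul_padicInt_inv hk)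
  rw [map_mul, map_one, map_natCast] at hinv
  simpa using eq_inv_of_mul_eq_one_right hinv

theorem padicNorm_sub_pow_mul_le_of_succ {z : ℕ → ℚ}
    (hz : ∀ r : ℕ, padicNorm p (z (r + 1) - p ^ 2 * z r) ≤ (p : ℚ) ^ (-(2 * (r + 2)) : ℤ)) (r : ℕ) :
    padicNorm p (z r - p ^ (2 * r) * z 0) ≤ (p : ℚ) ^ (-(2 * (r + 1)) : ℤ) := by
  have hp0 : (p : ℚ) ≠ 0 := mod_cast hp.out.ne_zero
  induction r with
  | zero =>
    rw [mul_zero, pow_zero, one_mul, sub_self, padicNorm.zero]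
    positivity
  | succ r ih =>
    have htelescope : z (r + 1) - p ^ (2 * (r + 1)) * z 0 =
        (z (r + 1) - p ^ 2 * z r) + p ^ 2 * (z r - p ^ (2 * r) * z 0) := by ring
    have hsq : padicNorm p ((p : ℚ) ^ 2) = (p : ℚ) ^ (-2 : ℤ) := by
      rw [padicNorm.eq_zpow_of_nonzero (pow_ne_zero 2 hp0), padicValRat.pow,
        padicValRat.self hp.out.one_lt]
      rfl
    rw [htelescope]
    refine padicNorm.nonarchimedean.trans (max_le ((hz r).trans_eq ?_) ?_)
    · push_cast
      ring_nf
    · calc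
        padicNorm p (p ^ 2 * (z r - p ^ (2 * r) * z 0)) =
            (p : ℚ) ^ (-2 : ℤ) * padicNorm p (z r - p ^ (2 * r) * z 0) := by
          rw [padicNorm.mul, hsq]
        _ ≤ (p : ℚ) ^ (-2 : ℤ) * (p : ℚ) ^ (-(2 * (r + 1)) : ℤ) := by gcongr
        _ = (p : ℚ) ^ (-(2 * ((r + 1 : ℕ) + 1)) : ℤ) := by
          rw [← zpow_add₀ hp0]
          push_cast
          ring_nf

theorem padicNorm_Z3_pow_succ_sub_le (hp5 : 5 ≤ p) {α β γ : ℕ} (heven : Even (α + β + γ)) {r : ℕ}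
    (hr : 1 ≤ r) :
    padicNorm p (Z3 p (p ^ (r + 1)) α β γ - (p : ℚ) ^ 2 * Z3 p (p ^ r) α β γ) ≤
      (p : ℚ) ^ (-(2 * (r + 1) : ℕ) : ℤ) := by
  let φ := PadicInt.toZModPow (p := p) (2 * (r + 1))
  let z (N : ℕ) : ℤ_[p] := primeToSum p N (fun k => (k : ℤ_[p]).inv) ![α, β, γ]
  have hpow {m : ℕ} (hm : 2 * (r + 1) ≤ m) : (p : ZMod (p ^ (2 * (r + 1)))) ^ m = 0 :=
    pow_eq_zero_of_le hm (by rw [← Nat.cast_pow, ZMod.natCast_self])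
  have hz : φ (z (p ^ (r + 1))) = p ^ 2 * φ (z (p ^ r)) := by
    rw [map_primeToSum, map_primeToSum, pow_succ']
    refine primeToSum_mul hp.out hp5 (dvd_pow_self p (by omega)) (pow_pos hp.out.pos r) ?_ ?_
      (fun k hk => ?_) (by rwa [Fin.sum_univ_three])
    · rw [Nat.cast_pow, ← pow_mul, hpow (by omega)]
    · rw [Nat.cast_pow, ← pow_mul, ← pow_add, hpow (by omega)]
    · rw [← map_natCast φ, Function.comp_apply, ← map_mul, natCast_mul_padicInt_inv hk, map_one]
  refine padicNorm_le_of_toZModPow_eq_zero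
    (x := z (p ^ (r + 1)) - (p : ℤ_[p]) ^ 2 * z (p ^ r)) ?_ ?_
  · push_cast
    rw [coe_primeToSum_padicInt_inv, coe_primeToSum_padicInt_inv]
  · rw [map_sub, map_mul, map_pow, map_natCast]
    exact sub_eq_zero.2 hz

end Padic

theorem stmt_9_general (p : ℕ) (hp : p.Prime) (hp5 : 5 ≤ p) (α β γ : ℕ)
    (heven : Even (α + β + γ)) (r : ℕ) (hr : 1 ≤ r) :
    padicNorm p (Z3 p (p ^ r) α β γ - (p : ℚ) ^ (2 * r - 2) * Z3 p p α β γ)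
      ≤ (p : ℚ) ^ (-(2 * r : ℤ)) := by
  have : Fact p.Prime := ⟨hp⟩
  obtain ⟨s, rfl⟩ := Nat.exists_eq_add_of_le' hr
  have hstep (s : ℕ) := padicNorm_Z3_pow_succ_sub_le hp5 heven s.succ_pos
  have h := padicNorm_sub_pow_mul_le_of_succ (z := fun s => Z3 p (p ^ (s + 1)) α β γ)
    (fun s => by exact_mod_cast hstep s) s
  rw [zero_add, pow_one] at h
  exact_mod_cast h

/-- If `p` is prime, `α+β+γ` is even with `p > α+β+γ`, then for every `r ≥ 1`,
`Z_{p^r}(α,β,γ) ≡ p^{2r-2} Z_p(α,β,γ) (mod p^{2r})` as `p`-integral rationals. -/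
theorem stmt_9 (p : ℕ) (hp : p.Prime) (α β γ : ℕ)
    (hα : 0 < α) (hβ : 0 < β) (hγ : 0 < γ)
    (hw : p > α + β + γ) (heven : Even (α + β + γ)) (r : ℕ) (hr : 1 ≤ r) :
    padicNorm p (Z3 p (p ^ r) α β γ - (p : ℚ) ^ (2 * r - 2) * Z3 p p α β γ)
      ≤ (p : ℚ) ^ (-(2 * r : ℤ)) :=
  stmt_9_general p hp (by obtain ⟨m, hm⟩ := heven; omega) α β γ heven r hr
end

section
/- Let p be a prime, r ≥ 1, and m, n positive even integers with m, n ≥ 2r and (p-1) ∤ (m+n). Then ∑_{0<k<l<p^r} k^m l^n ≡ -(p^r/2) B_{m+n} + p^{2r} ∑_{j=0}^{m} C(m+1, j) (m+n+1-j) B_j B_{m+n-j} / (2(m+1)) (mod p^{2r}), where the congruence is of p-integral rational numbers (each term p·B_j·B_{m+n-j} is p-integral since (p-1) ∤ (m+n)). -/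
/-!
Let `β` be the linear functional `X ^ k ↦ B_k` on `ℚ[X]` and `S_a` the polynomial with
`S_a(l) = ∑ k ∈ range l, k ^ a`. By the Euler–Maclaurin formula
`∑ l ∈ range N, f(l) = ∑ t, N ^ (t + 1) / (t + 1)! * β(f⁽ᵗ⁾)`, applied to `f = X ^ n * S_m` and
`N = p ^ r`, the terms `t = 0, 1` are the two terms of the congruence, and those with `t ≥ 2` have
to be shown to lie in `p ^ (2 * r) ℤ_(p)`.

Because `S_a' = a * S_{a-1} + B_a`, the derivatives of `f` are integral combinations of the
polynomials `X ^ c * S_a` and `B_a * X ^ c`. Now `p * β(X ^ c * S_a)` and `p * B_k` are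
`p`-integral: `β(f)` is the `p`-adic limit of `p ^ (-s) * ∑ l ∈ range (p ^ s), f(l)` (the Volkenborn
integral of `f`), and for these `f` the sum over `range (p ^ (s + 1))` is divisible by `p ^ s`.
Hence `p ^ 2 * β(f⁽ᵗ⁾)` is `p`-integral, which beats the denominator `(t + 1)!` for `t ≥ 3` and
`p ≥ 5`. For `t = 2` one factor `p` has to suffice, and it does because `a + c = m + n - 1` is odd,
so that one of `B_a`, `B_c` is `0` or `-1 / 2`.
-/

open Finset Filter
open Polynomial hiding bernoulli bernoulli_one
open scoped Topology

/-- `f` is *block affine* at `p` if for every `s`, modulo `p ^ (s + 1)`, translating `x` by `v`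
blocks of length `p ^ (s + 1)` adds `v` times a multiple of `p ^ s` that depends only on `x`. This
is what makes the sum of `f` over `range (p ^ (s + 1))` divisible by `p ^ s`. -/
def IsBlockAffine (p : ℕ) (f : ℕ → ℤ) : Prop :=
  ∀ s, ∃ g : ℕ → ℤ, ∀ x v : ℕ,
    f (x + p ^ (s + 1) * v) ≡ f x + v * (p ^ s * g x) [ZMOD p ^ (s + 1)]

section BlockSums

theorem sum_range_mul_eq_sum_sum {A : Type*} [AddCommMonoid A] (f : ℕ → A) (M V : ℕ) :
    ∑ x ∈ range (M * V), f x = ∑ v ∈ range V, ∑ x ∈ range M, f (x + M * v) := by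
  induction V with
  | zero => simp
  | succ V ih =>
    rw [mul_add_one, sum_range_add, ih, sum_range_succ]
    simp only [add_comm]

theorem sum_range_add_mul_modEq {M : ℕ} {f : ℕ → ℤ}
    (hf : ∀ x v, f (x + M * v) ≡ f x [ZMOD M]) (x v : ℕ) :
    ∑ k ∈ range (x + M * v), f k ≡
      ∑ k ∈ range x, f k + v * ∑ k ∈ range M, f k [ZMOD M] := by
  have hblocks : ∑ w ∈ range v, ∑ k ∈ range M, f (k + M * w) ≡
      ∑ _w ∈ range v, ∑ k ∈ range M, f k [ZMOD M] :=
    Int.ModEq.sum fun w _ => Int.ModEq.sum fun k _ => hf k w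
  have htail : ∑ k ∈ range x, f (k + M * v) ≡ ∑ k ∈ range x, f k [ZMOD M] :=
    Int.ModEq.sum fun k _ => hf k v
  rw [add_comm x, sum_range_add, sum_range_mul_eq_sum_sum, add_comm]
  simpa [add_comm (M * v)] using htail.add hblocks

theorem natCast_add_mul_pow_modEq (M m x v : ℕ) :
    ((x + M * v : ℕ) : ℤ) ^ m ≡ (x : ℤ) ^ m [ZMOD M] := by
  refine Int.ModEq.pow m ?_
  push_cast
  exact Int.modEq_iff_add_fac.2 ⟨-v, by ring⟩

variable {p : ℕ}

theorem isBlockAffine_pow (m : ℕ) : IsBlockAffine p fun l => (l : ℤ) ^ m := fun s =>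
  ⟨0, fun x v => by simpa using natCast_add_mul_pow_modEq (p ^ (s + 1)) m x v⟩

theorem dvd_sum_range_id_of_odd (hp : Odd p) : (p : ℤ) ∣ ∑ v ∈ range p, (v : ℤ) := by
  have hdvd : p ∣ (∑ v ∈ range p, v) * 2 := sum_range_id_mul_two p ▸ dvd_mul_right _ _
  simpa using Int.natCast_dvd_natCast.2 ((Nat.coprime_two_right.2 hp).dvd_of_dvd_mul_right hdvd)

theorem IsBlockAffine.pow_dvd_sum_range {f : ℕ → ℤ} (hf : IsBlockAffine p f) (hp : Odd p)
    (s : ℕ) : (p : ℤ) ^ s ∣ ∑ l ∈ range (p ^ (s + 1)), f l := by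
  induction s with
  | zero => simp
  | succ s ih =>
    obtain ⟨g, hg⟩ := hf s
    obtain ⟨q, hq⟩ := dvd_sum_range_id_of_odd hp
    obtain ⟨y, hy⟩ := ih
    have hblocks : ∑ l ∈ range (p ^ (s + 1) * p), f l ≡ ∑ v ∈ range p, ∑ x ∈ range (p ^ (s + 1)),
        (f x + v * (p ^ s * g x)) [ZMOD p ^ (s + 1)] := by
      rw [sum_range_mul_eq_sum_sum]
      exact Int.ModEq.sum fun v _ => Int.ModEq.sum fun x _ => hg x v
    rw [pow_succ p (s + 1), ← Int.modEq_zero_iff_dvd]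
    refine hblocks.trans (Int.modEq_zero_iff_dvd.2 ?_)
    simp only [sum_add_distrib, ← mul_sum, ← sum_mul, sum_const, card_range, nsmul_eq_mul, hy, hq]
    exact ⟨y + q * ∑ x ∈ range (p ^ (s + 1)), g x, by ring⟩

theorem isBlockAffine_pow_mul_sum_range_pow (hp : Odd p) (c m : ℕ) :
    IsBlockAffine p fun l => (l : ℤ) ^ c * ∑ k ∈ range l, (k : ℤ) ^ m := fun s => by
  obtain ⟨y, hy⟩ := (isBlockAffine_pow m).pow_dvd_sum_range hp s
  refine ⟨fun x => x ^ c * y, fun x v => ?_⟩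
  have hsum := sum_range_add_mul_modEq (f := fun k => (k : ℤ) ^ m)
    (natCast_add_mul_pow_modEq (p ^ (s + 1)) m) x v
  convert (natCast_add_mul_pow_modEq (p ^ (s + 1)) c x v).mul hsum using 1
  · push_cast; rfl
  · rw [hy]; ring

end BlockSums

/-- The ring `ℤ_(p)` of `p`-integral rational numbers. -/
noncomputable def pIntegers (p : ℕ) [Fact p.Prime] : Subring ℚ :=
  (PadicInt.subring p).comap (Rat.castHom ℚ_[p])

section pIntegers

variable {p : ℕ} [Fact p.Prime]

theorem mem_pIntegers_iff {x : ℚ} : x ∈ pIntegers p ↔ ‖(x : ℚ_[p])‖ ≤ 1 := Iff.rfl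

theorem padicNorm_prime_pow_mul_le {x : ℚ} (hx : x ∈ pIntegers p) (n : ℕ) :
    padicNorm p (p ^ n * x) ≤ (p : ℚ) ^ (-n : ℤ) := by
  rw [mem_pIntegers_iff] at hx
  have : ‖((p ^ n * x : ℚ) : ℚ_[p])‖ ≤ (p : ℝ) ^ (-n : ℤ) := by
    push_cast
    rw [norm_mul, Padic.norm_p_pow]
    exact mul_le_of_le_one_right (by positivity) hx
  rw [Padic.eq_padicNorm] at this
  rw [← Rat.cast_le (K := ℝ)]
  simpa using this

theorem prime_pow_div_mem_pIntegers {n k : ℕ} (hn : n ≠ 0) (hk : padicValNat p n ≤ k) :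
    (p : ℚ) ^ k / n ∈ pIntegers p := by
  have hp : 1 < p := (Fact.out : p.Prime).one_lt
  have hn' : (n : ℚ) ≠ 0 := mod_cast hn
  rw [mem_pIntegers_iff, Rat.cast_div, norm_div, Rat.cast_pow, Rat.cast_natCast, Padic.norm_p_pow,
    Padic.eq_padicNorm, padicNorm.eq_zpow_of_nonzero hn', padicValRat.of_nat]
  push_cast
  rw [← zpow_sub₀ (by positivity), padicValRat.of_nat]
  exact zpow_le_one_of_nonpos₀ (mod_cast hp.le) (by lia)

theorem two_inv_mem_pIntegers (hp2 : p ≠ 2) : (2 : ℚ)⁻¹ ∈ pIntegers p := by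
  have : padicValNat p 2 = 0 := padicValNat_primes hp2
  simpa using prime_pow_div_mem_pIntegers two_ne_zero this.le

-- The exponent `t - 3` is truncated: for `t = 2` the claim is that `3!` is a `p`-adic unit.
theorem prime_pow_div_factorial_mem_pIntegers (hp5 : 5 ≤ p) {t : ℕ} (ht : 2 ≤ t) :
    (p : ℚ) ^ (t - 3) / (t + 1).factorial ∈ pIntegers p := by
  refine prime_pow_div_mem_pIntegers (t + 1).factorial_ne_zero ?_
  have hlegendre := sub_one_mul_padicValNat_factorial_lt_of_ne_zero p t.succ_ne_zero
  have := Nat.mul_le_mul_right (padicValNat p (t + 1).factorial) (show 4 ≤ p - 1 by lia)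
  lia

end pIntegers

/-- The linear functional `X ^ k ↦ B_k` on polynomials: the umbral evaluation at the Bernoulli
numbers, which is also the Volkenborn integral over `ℤ_p`. -/
noncomputable def bernoulliFunctional : ℚ[X] →ₗ[ℚ] ℚ :=
  Polynomial.lsum fun k => bernoulli k • LinearMap.id

section BernoulliFunctional

@[simp]
theorem bernoulliFunctional_monomial (k : ℕ) (c : ℚ) :
    bernoulliFunctional (monomial k c) = bernoulli k * c := by
  simp [bernoulliFunctional, Polynomial.lsum_apply]

theorem sum_range_pow_eq_sum_descFactorial (s N : ℕ) :
    ∑ l ∈ range N, (l : ℚ) ^ s = ∑ t ∈ range (s + 1),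
      (N : ℚ) ^ (t + 1) / (t + 1).factorial * (s.descFactorial t * bernoulli (s - t)) := by
  rw [sum_range_pow, ← sum_range_reflect]
  refine sum_congr rfl fun t ht => ?_
  have hts : t ≤ s := by simpa [Nat.lt_succ_iff] using ht
  have hchoose : ((s : ℚ) + 1) * s.choose t = (s + 1).choose (t + 1) * (t + 1) :=
    mod_cast Nat.add_one_mul_choose_eq s t
  rw [show s + 1 - 1 - t = s - t by lia, show s + 1 - (s - t) = t + 1 by lia,
    ← Nat.choose_symm_of_eq_add (show s + 1 = t + 1 + (s - t) by lia),
    Nat.descFactorial_eq_factorial_mul_choose, Nat.factorial_succ]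
  have : (t.factorial : ℚ) ≠ 0 := mod_cast t.factorial_ne_zero
  push_cast
  field_simp
  linear_combination -bernoulli (s - t) * N ^ (t + 1) * hchoose

theorem sum_range_eval_eq_sum_bernoulliFunctional {f : ℚ[X]} {d : ℕ} (hd : f.natDegree ≤ d)
    (N : ℕ) :
    ∑ l ∈ range N, f.eval (l : ℚ) = ∑ t ∈ range (d + 1),
      (N : ℚ) ^ (t + 1) / (t + 1).factorial * bernoulliFunctional (derivative^[t] f) := by
  have hmonomial (s : ℕ) (hs : s ∈ range (d + 1)) (c : ℚ) :
      ∑ l ∈ range N, (monomial s c).eval (l : ℚ) = ∑ t ∈ range (d + 1),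
        (N : ℚ) ^ (t + 1) / (t + 1).factorial *
          bernoulliFunctional (derivative^[t] (monomial s c)) := by
    have hderiv (t : ℕ) : derivative^[t] (monomial s c) =
        monomial (s - t) (s.descFactorial t * c) := by
      rw [← C_mul_X_pow_eq_monomial, iterate_derivative_C_mul,
        iterate_derivative_X_pow_eq_C_mul, ← C_mul_X_pow_eq_monomial, C_mul]
      ring
    simp only [eval_monomial, ← mul_sum, hderiv, bernoulliFunctional_monomial,
      sum_range_pow_eq_sum_descFactorial]
    have hsub : range (s + 1) ⊆ range (d + 1) := range_subset_range.2 (mem_range.1 hs)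
    rw [mul_sum, ← sum_subset hsub]
    · exact sum_congr rfl fun t _ => by ring
    · intro t _ ht
      rw [Nat.descFactorial_of_lt (by simpa using ht)]
      simp
  rw [f.as_sum_range' (d + 1) (by lia)]
  simp only [eval_finsetSum, iterate_derivative_sum, map_sum, mul_sum]
  rw [sum_comm (s := range N), sum_comm (s := range (d + 1)) (t := range (d + 1))]
  exact sum_congr rfl fun s hs => hmonomial s hs _

variable {p : ℕ} [Fact p.Prime]

theorem tendsto_sum_range_eval_div_pow (f : ℚ[X]) :
    Tendsto (fun s => (((∑ l ∈ range (p ^ s), f.eval (l : ℚ)) / p ^ s : ℚ) : ℚ_[p])) atTop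
      (𝓝 (bernoulliFunctional f)) := by
  have hp0 : (p : ℚ) ≠ 0 := mod_cast (Fact.out : p.Prime).ne_zero
  set b : ℕ → ℚ := fun t => bernoulliFunctional (derivative^[t] f) / (t + 1).factorial
  have hexpand (s : ℕ) : (∑ l ∈ range (p ^ s), f.eval (l : ℚ)) / p ^ s =
      ∑ t ∈ range (f.natDegree + 1), (p ^ s) ^ t * b t := by
    rw [sum_range_eval_eq_sum_bernoulliFunctional le_rfl, sum_div]
    refine sum_congr rfl fun t _ => ?_
    push_cast [b]
    field_simp
    ring
  have hpow : Tendsto (fun s => (p : ℚ_[p]) ^ s) atTop (𝓝 0) :=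
    tendsto_pow_atTop_nhds_zero_of_norm_lt_one Padic.norm_p_lt_one
  have hlim : Tendsto (fun s => ∑ t ∈ range (f.natDegree + 1), ((p : ℚ_[p]) ^ s) ^ t * b t) atTop
      (𝓝 (∑ t ∈ range (f.natDegree + 1), 0 ^ t * b t)) :=
    tendsto_finsetSum _ fun t _ => (hpow.pow t).mul_const _
  convert hlim using 2
  · rw [hexpand]; push_cast; rfl
  · simp [sum_range_succ', b]

theorem prime_mul_bernoulliFunctional_mem_pIntegers (hp : Odd p) {f : ℚ[X]} {a : ℕ → ℤ}
    (ha : IsBlockAffine p a) (hfa : ∀ l : ℕ, f.eval (l : ℚ) = a l) :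
    p * bernoulliFunctional f ∈ pIntegers p := by
  have hp0 : (p : ℚ) ≠ 0 := mod_cast (Fact.out : p.Prime).ne_zero
  have hlim := (((tendsto_sum_range_eval_div_pow (p := p) f).comp
    (tendsto_add_atTop_nat 1)).const_mul (p : ℚ_[p])).norm
  rw [mem_pIntegers_iff]
  push_cast
  refine le_of_tendsto hlim (Eventually.of_forall fun s => ?_)
  obtain ⟨y, hy⟩ := ha.pow_dvd_sum_range hp s
  have hint : (p : ℚ) * ((∑ l ∈ range (p ^ (s + 1)), f.eval (l : ℚ)) / p ^ (s + 1)) = y := by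
    simp only [hfa, ← Int.cast_sum, hy]
    push_cast
    field_simp
    ring
  have := mem_pIntegers_iff.1 (hint ▸ intCast_mem (pIntegers p) y)
  simpa using this

end BernoulliFunctional

/-- The polynomial whose value at a natural number `l` is `∑ k ∈ range l, k ^ m`. -/
noncomputable def powerSumPolynomial (m : ℕ) : ℚ[X] :=
  C (m + 1 : ℚ)⁻¹ * (Polynomial.bernoulli (m + 1) - C (bernoulli (m + 1)))

theorem powerSumPolynomial_eq_sum_monomial (m : ℕ) :
    powerSumPolynomial m = ∑ j ∈ range (m + 1),
      monomial (m + 1 - j) (bernoulli j * ((m + 1).choose j : ℚ) / (m + 1)) := by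
  rw [powerSumPolynomial, Polynomial.bernoulli, sum_range_succ, Nat.sub_self, Nat.choose_self,
    Nat.cast_one, mul_one, monomial_zero_left, add_sub_cancel_right, mul_sum]
  exact sum_congr rfl fun j _ => by rw [C_mul_monomial, inv_mul_eq_div]

theorem eval_powerSumPolynomial (m l : ℕ) :
    (powerSumPolynomial m).eval (l : ℚ) = ∑ k ∈ range l, (k : ℚ) ^ m := by
  rw [powerSumPolynomial, eval_C_mul, eval_sub, eval_C, ← Nat.succ_eq_add_one,
    ← sum_range_pow_eq_bernoulli_sub, inv_mul_cancel_left₀ (by positivity)]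

theorem natDegree_powerSumPolynomial_le (m : ℕ) : (powerSumPolynomial m).natDegree ≤ m + 1 := by
  rw [powerSumPolynomial_eq_sum_monomial]
  exact natDegree_sum_le_of_forall_le _ _ fun _ _ =>
    (natDegree_monomial_le _).trans (Nat.sub_le _ _)

theorem derivative_powerSumPolynomial (m : ℕ) :
    derivative (powerSumPolynomial m) = m * powerSumPolynomial (m - 1) + C (bernoulli m) := by
  have hderiv : derivative (powerSumPolynomial m) = Polynomial.bernoulli m := by
    rw [powerSumPolynomial, derivative_C_mul, derivative_sub, derivative_C, sub_zero,
      derivative_bernoulli_add_one, ← mul_assoc]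
    have : (m : ℚ[X]) + 1 = C (m + 1 : ℚ) := by simp
    rw [this, ← C_mul, inv_mul_cancel₀ (by positivity), C_1, one_mul]
  rw [hderiv]
  cases m with
  | zero => simp
  | succ m =>
    have : ((m + 1 : ℕ) : ℚ[X]) = C (m + 1 : ℚ) := by simp
    rw [powerSumPolynomial, Nat.add_sub_cancel, this, ← mul_assoc, ← C_mul,
      mul_inv_cancel₀ (by positivity), C_1, one_mul, sub_add_cancel]

/-- The additive group generated by the polynomials `X ^ c * S_a` with `c + a + 1 = d` and
`B_a * X ^ c` with `a + c = d`, where `S_a` is the power sum polynomial of exponent `a`. -/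
noncomputable def powerSumSpan (d : ℕ) : AddSubgroup ℚ[X] :=
  AddSubgroup.closure
    ({f | ∃ c a, c + a + 1 = d ∧ f = X ^ c * powerSumPolynomial a} ∪
      {f | ∃ a c, a + c = d ∧ f = C (bernoulli a) * X ^ c})

section PowerSumSpan

theorem X_pow_mul_powerSumPolynomial_mem (c a : ℕ) :
    X ^ c * powerSumPolynomial a ∈ powerSumSpan (c + a + 1) :=
  AddSubgroup.subset_closure (.inl ⟨c, a, rfl, rfl⟩)

theorem C_bernoulli_mul_X_pow_mem (a c : ℕ) :
    C (bernoulli a) * X ^ c ∈ powerSumSpan (a + c) :=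
  AddSubgroup.subset_closure (.inr ⟨a, c, rfl, rfl⟩)

theorem powerSumSpan_le {d : ℕ} {G : AddSubgroup ℚ[X]}
    (hsum : ∀ c a, c + a + 1 = d → X ^ c * powerSumPolynomial a ∈ G)
    (hbernoulli : ∀ a c, a + c = d → C (bernoulli a) * X ^ c ∈ G) : powerSumSpan d ≤ G := by
  rw [powerSumSpan, AddSubgroup.closure_le]
  rintro _ (⟨c, a, h, rfl⟩ | ⟨a, c, h, rfl⟩)
  exacts [hsum c a h, hbernoulli a c h]

theorem natDegree_le_of_mem_powerSumSpan {d : ℕ} {f : ℚ[X]} (hf : f ∈ powerSumSpan d) :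
    f.natDegree ≤ d := by
  suffices powerSumSpan d ≤ (degreeLE ℚ d).toAddSubgroup from
    natDegree_le_iff_degree_le.2 (mem_degreeLE.1 (this hf))
  refine powerSumSpan_le (fun c a h => ?_) (fun a c h => ?_) <;>
    refine mem_degreeLE.2 (natDegree_le_iff_degree_le.1 ?_)
  · have := natDegree_powerSumPolynomial_le a
    compute_degree
    lia
  · compute_degree
    lia

theorem derivative_X_pow_mul_powerSumPolynomial (c a : ℕ) :
    derivative (X ^ c * powerSumPolynomial a) =
      (c : ℚ[X]) * (X ^ (c - 1) * powerSumPolynomial a) +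
        ((a : ℚ[X]) * (X ^ c * powerSumPolynomial (a - 1)) + C (bernoulli a) * X ^ c) := by
  rw [derivative_mul, derivative_X_pow, derivative_powerSumPolynomial, C_eq_natCast]
  ring

theorem derivative_C_bernoulli_mul_X_pow (a c : ℕ) :
    derivative (C (bernoulli a) * X ^ c) = (c : ℚ[X]) * (C (bernoulli a) * X ^ (c - 1)) := by
  rw [derivative_C_mul_X_pow, C_mul, C_eq_natCast]
  ring

theorem derivative_mem_powerSumSpan {d : ℕ} {f : ℚ[X]} (hf : f ∈ powerSumSpan d) :
    derivative f ∈ powerSumSpan (d - 1) := by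
  suffices powerSumSpan d ≤ (powerSumSpan (d - 1)).comap derivative.toAddMonoidHom from this hf
  have natCast_mul_mem {k e : ℕ} {g : ℚ[X]} (hg : k ≠ 0 → g ∈ powerSumSpan e) :
      (k : ℚ[X]) * g ∈ powerSumSpan e := by
    rcases eq_or_ne k 0 with rfl | hk
    · simp
    · exact nsmul_eq_mul k g ▸ nsmul_mem (hg hk) k
  refine powerSumSpan_le ?_ ?_
  · rintro c a rfl
    simp only [AddSubgroup.mem_comap, LinearMap.toAddMonoidHom_coe,
      derivative_X_pow_mul_powerSumPolynomial]
    refine add_mem (natCast_mul_mem fun hc => ?_) (add_mem (natCast_mul_mem fun ha => ?_) ?_)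
    · convert X_pow_mul_powerSumPolynomial_mem (c - 1) a using 2; lia
    · convert X_pow_mul_powerSumPolynomial_mem c (a - 1) using 2; lia
    · convert C_bernoulli_mul_X_pow_mem a c using 2; lia
  · rintro a c rfl
    simp only [AddSubgroup.mem_comap, LinearMap.toAddMonoidHom_coe,
      derivative_C_bernoulli_mul_X_pow]
    refine natCast_mul_mem fun hc => ?_
    convert C_bernoulli_mul_X_pow_mem a (c - 1) using 2; lia

theorem iterate_derivative_mem_powerSumSpan {d : ℕ} {f : ℚ[X]} (hf : f ∈ powerSumSpan d)
    (t : ℕ) : derivative^[t] f ∈ powerSumSpan (d - t) := by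
  induction t with
  | zero => exact hf
  | succ t ih =>
    rw [Function.iterate_succ_apply', ← Nat.sub_sub]
    exact derivative_mem_powerSumSpan ih

variable {p : ℕ} [Fact p.Prime]

theorem prime_mul_bernoulli_mem_pIntegers (hp : Odd p) (k : ℕ) :
    p * bernoulli k ∈ pIntegers p := by
  simpa using prime_mul_bernoulliFunctional_mem_pIntegers hp (f := monomial k 1)
    (isBlockAffine_pow k) (by simp)

theorem prime_mul_bernoulliFunctional_X_pow_mul_powerSumPolynomial_mem (hp : Odd p) (c a : ℕ) :
    p * bernoulliFunctional (X ^ c * powerSumPolynomial a) ∈ pIntegers p :=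
  prime_mul_bernoulliFunctional_mem_pIntegers hp (isBlockAffine_pow_mul_sum_range_pow hp c a)
    fun l => by simp [eval_powerSumPolynomial]

theorem bernoulli_mem_pIntegers_of_odd (hp : Odd p) {k : ℕ} (hk : Odd k) :
    bernoulli k ∈ pIntegers p := by
  rcases eq_or_ne k 1 with rfl | hk1
  · rw [bernoulli_one, neg_div, one_div]
    exact neg_mem (two_inv_mem_pIntegers (by grind))
  · rw [bernoulli_eq_zero_of_odd hk (by grind)]
    exact zero_mem _

theorem prime_mul_bernoulli_mul_bernoulli_mem_pIntegers_of_odd (hp : Odd p) {a c : ℕ}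
    (h : Odd (a + c)) : p * (bernoulli a * bernoulli c) ∈ pIntegers p := by
  rcases Nat.even_or_odd a with ha | ha
  · have hc : Odd c := by grind
    rw [← mul_assoc]
    exact mul_mem (prime_mul_bernoulli_mem_pIntegers hp a) (bernoulli_mem_pIntegers_of_odd hp hc)
  · rw [mul_left_comm]
    exact mul_mem (bernoulli_mem_pIntegers_of_odd hp ha) (prime_mul_bernoulli_mem_pIntegers hp c)

theorem mul_bernoulliFunctional_mem_pIntegers_of_mem_powerSumSpan {d : ℕ} {q : ℚ}
    (hsum : ∀ c a, c + a + 1 = d →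
      q * bernoulliFunctional (X ^ c * powerSumPolynomial a) ∈ pIntegers p)
    (hprod : ∀ a c, a + c = d → q * (bernoulli a * bernoulli c) ∈ pIntegers p)
    {f : ℚ[X]} (hf : f ∈ powerSumSpan d) : q * bernoulliFunctional f ∈ pIntegers p := by
  suffices powerSumSpan d ≤ (pIntegers p).toAddSubgroup.comap
      (q • bernoulliFunctional).toAddMonoidHom from this hf
  refine powerSumSpan_le hsum fun a c h => ?_
  simpa [C_mul_X_pow_eq_monomial, mul_comm (bernoulli c)] using hprod a c h

theorem prime_mul_bernoulliFunctional_mem_pIntegers_of_odd (hp : Odd p) {d : ℕ} (hd : Odd d)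
    {f : ℚ[X]} (hf : f ∈ powerSumSpan d) : p * bernoulliFunctional f ∈ pIntegers p :=
  mul_bernoulliFunctional_mem_pIntegers_of_mem_powerSumSpan
    (fun c a _ => prime_mul_bernoulliFunctional_X_pow_mul_powerSumPolynomial_mem hp c a)
    (fun _ _ h => prime_mul_bernoulli_mul_bernoulli_mem_pIntegers_of_odd hp (h ▸ hd)) hf

theorem prime_sq_mul_bernoulliFunctional_mem_pIntegers (hp : Odd p) {d : ℕ}
    {f : ℚ[X]} (hf : f ∈ powerSumSpan d) : p ^ 2 * bernoulliFunctional f ∈ pIntegers p := by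
  refine mul_bernoulliFunctional_mem_pIntegers_of_mem_powerSumSpan (fun c a _ => ?_)
    (fun a c _ => ?_) hf
  · rw [sq, mul_assoc]
    exact mul_mem (natCast_mem _ p)
      (prime_mul_bernoulliFunctional_X_pow_mul_powerSumPolynomial_mem hp c a)
  · rw [sq, mul_mul_mul_comm]
    exact mul_mem (prime_mul_bernoulli_mem_pIntegers hp a) (prime_mul_bernoulli_mem_pIntegers hp c)

theorem prime_pow_div_factorial_mul_bernoulliFunctional_mem_pIntegers (hp5 : 5 ≤ p) {d t : ℕ}
    (hd : Odd d) {f : ℚ[X]} (hf : f ∈ powerSumSpan d) (ht : 2 ≤ t) (htd : t ≤ d) :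
    p ^ (t - 1) / (t + 1).factorial * bernoulliFunctional (derivative^[t] f) ∈ pIntegers p := by
  have hp : Odd p := (Fact.out : p.Prime).odd_of_ne_two (by lia)
  have hmem := iterate_derivative_mem_powerSumSpan hf t
  have hfactorial := prime_pow_div_factorial_mem_pIntegers hp5 ht
  rcases ht.eq_or_lt with rfl | ht3
  · have hodd : Odd (d - 2) := by grind
    convert mul_mem hfactorial (prime_mul_bernoulliFunctional_mem_pIntegers_of_odd hp hodd hmem)
      using 1
    ring
  · convert mul_mem hfactorial (prime_sq_mul_bernoulliFunctional_mem_pIntegers hp hmem) using 1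
    rw [show t - 1 = t - 3 + 2 by lia]
    ring

theorem padicNorm_sum_range_eval_sub_bernoulliFunctional_le (hp5 : 5 ≤ p) {r d : ℕ}
    (hr : 1 ≤ r) (hd : Odd d) {f : ℚ[X]} (hf : f ∈ powerSumSpan d) :
    padicNorm p (∑ l ∈ range (p ^ r), f.eval (l : ℚ) -
      (p ^ r * bernoulliFunctional f + p ^ (2 * r) / 2 * bernoulliFunctional (derivative f))) ≤
      (p : ℚ) ^ (-(2 * r : ℤ)) := by
  obtain ⟨e, rfl⟩ : ∃ e, d = e + 1 := ⟨d - 1, by grind⟩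
  set y : ℚ := ∑ t ∈ range e, p ^ ((r - 1) * (t + 1)) *
    (p ^ (t + 2 - 1) / (t + 2 + 1).factorial * bernoulliFunctional (derivative^[t + 2] f))
  have hy : y ∈ pIntegers p := sum_mem fun t ht => mul_mem (pow_mem (natCast_mem _ p) _)
    (prime_pow_div_factorial_mul_bernoulliFunctional_mem_pIntegers hp5 hd hf (by lia)
      (by have := mem_range.1 ht; lia))
  have hexpand : ∑ l ∈ range (p ^ r), f.eval (l : ℚ) -
      (p ^ r * bernoulliFunctional f + p ^ (2 * r) / 2 * bernoulliFunctional (derivative f)) =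
        p ^ (2 * r) * y := by
    have hpow (t : ℕ) : ((p ^ r : ℕ) : ℚ) ^ (t + 2 + 1) =
        p ^ (2 * r) * (p ^ ((r - 1) * (t + 1)) * p ^ (t + 2 - 1)) := by
      obtain ⟨q, rfl⟩ := Nat.exists_eq_add_of_le' hr
      push_cast [Nat.add_sub_cancel, show t + 2 - 1 = t + 1 by lia]
      ring
    have htail : ∑ t ∈ range e, ((p ^ r : ℕ) : ℚ) ^ (t + 2 + 1) / (t + 2 + 1).factorial *
        bernoulliFunctional (derivative^[t + 2] f) = p ^ (2 * r) * y := by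
      rw [mul_sum]
      exact sum_congr rfl fun t _ => by rw [hpow]; ring
    rw [sum_range_eval_eq_sum_bernoulliFunctional (natDegree_le_of_mem_powerSumSpan hf),
      sum_range_succ', sum_range_succ', htail]
    push_cast [zero_add, Function.iterate_one, Function.iterate_zero_apply, Nat.factorial]
    ring
  rw [hexpand]
  exact_mod_cast padicNorm_prime_pow_mul_le hy (2 * r)

end PowerSumSpan

theorem bernoulliFunctional_X_pow_mul_powerSumPolynomial {m n : ℕ} (hmn : Even (m + n))
    (hm : 0 < m) (hn : 0 < n) :
    bernoulliFunctional (X ^ n * powerSumPolynomial m) = -(1 / 2) * bernoulli (m + n) := by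
  rw [powerSumPolynomial_eq_sum_monomial, ← monomial_one_right_eq_X_pow, mul_sum, map_sum]
  simp only [monomial_mul_monomial, bernoulliFunctional_monomial, one_mul]
  rw [sum_eq_single_of_mem 1 (by simp; lia)]
  · rw [show n + (m + 1 - 1) = m + n by lia, bernoulli_one, Nat.choose_one_right]
    push_cast
    field_simp
  · intro j hj hj1
    rw [mem_range] at hj
    rcases Nat.even_or_odd j with hj2 | hj2
    · rw [bernoulli_eq_zero_of_odd (n := n + (m + 1 - j)) (by grind) (by lia), zero_mul]
    · rw [bernoulli_eq_zero_of_odd hj2 (by grind), zero_mul, zero_div, mul_zero]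

theorem bernoulliFunctional_derivative_X_pow_mul_powerSumPolynomial (m n : ℕ) :
    bernoulliFunctional (derivative (X ^ n * powerSumPolynomial m)) =
      ∑ j ∈ range (m + 1), ((m + 1).choose j : ℚ) * ((m + n + 1 - j : ℕ) : ℚ) *
        bernoulli j * bernoulli (m + n - j) / (m + 1) := by
  rw [powerSumPolynomial_eq_sum_monomial, ← monomial_one_right_eq_X_pow, mul_sum]
  simp only [map_sum, monomial_mul_monomial, derivative_monomial, bernoulliFunctional_monomial,
    one_mul]
  refine sum_congr rfl fun j hj => ?_
  rw [mem_range] at hj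
  rw [show n + (m + 1 - j) - 1 = m + n - j by lia, show n + (m + 1 - j) = m + n + 1 - j by lia]
  ring

theorem sum_filter_pos_lt_eq_sum_range_eval {m : ℕ} (hm : 0 < m) (n N : ℕ) :
    ∑ x ∈ (range N ×ˢ range N).filter (fun x : ℕ × ℕ => 0 < x.1 ∧ x.1 < x.2),
        (x.1 : ℚ) ^ m * (x.2 : ℚ) ^ n =
      ∑ l ∈ range N, (X ^ n * powerSumPolynomial m).eval (l : ℚ) := by
  rw [sum_filter, sum_product_right]
  refine sum_congr rfl fun l hl => ?_
  rw [eval_mul, eval_X_pow, eval_powerSumPolynomial, mul_sum, ← sum_filter]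
  refine sum_subset_zero_on_sdiff (fun k hk => ?_) (fun k hk => ?_) fun k _ => mul_comm _ _
  · simp only [mem_filter, mem_range] at hk ⊢
    exact hk.2.2
  · have : k = 0 := by grind
    simp [this, hm.ne']

theorem five_le_of_even_of_not_sub_one_dvd {p k : ℕ} (hp : p.Prime) (hk : Even k)
    (hdvd : ¬ (p - 1) ∣ k) : 5 ≤ p := by
  have h2 : p ≠ 2 := by rintro rfl; exact hdvd (one_dvd k)
  have h3 : p ≠ 3 := by rintro rfl; exact hdvd hk.two_dvd
  exact hp.five_le_of_ne_two_of_ne_three h2 h3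

theorem stmt_15_general (p : ℕ) (hp : p.Prime) (hp5 : 5 ≤ p) (r : ℕ) (hr : 1 ≤ r) (m n : ℕ)
    (hmn : Even (m + n)) (hm0 : 0 < m) (hn0 : 0 < n) :
    padicNorm p
        ((∑ x ∈ (Finset.range (p ^ r) ×ˢ Finset.range (p ^ r)).filter
            (fun x : ℕ × ℕ => 0 < x.1 ∧ x.1 < x.2),
            (x.1 : ℚ) ^ m * (x.2 : ℚ) ^ n) -
          (-((p : ℚ) ^ r / 2) * bernoulli (m + n) +
            (p : ℚ) ^ (2 * r) *
              ∑ j ∈ Finset.range (m + 1),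
                ((m + 1).choose j : ℚ) * ((m + n + 1 - j : ℕ) : ℚ) *
                  bernoulli j * bernoulli (m + n - j) / (2 * (m + 1))))
      ≤ (p : ℚ) ^ (-(2 * r : ℤ)) := by
  have : Fact p.Prime := ⟨hp⟩
  have hodd : Odd (n + m + 1) := by grind
  convert padicNorm_sum_range_eval_sub_bernoulliFunctional_le hp5 hr hodd
    (X_pow_mul_powerSumPolynomial_mem n m) using 3
  · exact sum_filter_pos_lt_eq_sum_range_eval hm0 n _
  · rw [bernoulliFunctional_X_pow_mul_powerSumPolynomial hmn hm0 hn0,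
      bernoulliFunctional_derivative_X_pow_mul_powerSumPolynomial, mul_sum, mul_sum]
    congr 1
    · ring
    · exact sum_congr rfl fun j _ => by rw [mul_comm 2, ← div_div]; ring

/-- Key power-sum congruence: for a prime `p`, `r ≥ 1`, and positive even
`m, n ≥ 2r` with `(p-1) ∤ (m+n)`,
`∑_{0<k<l<p^r} k^m l^n ≡ -(p^r/2) B_{m+n}
  + p^{2r} ∑_{j=0}^{m} C(m+1,j) (m+n+1-j) B_j B_{m+n-j}/(2(m+1)) (mod p^{2r})`
as `p`-integral rationals. -/
theorem stmt_15 (p : ℕ) (hp : p.Prime) (r : ℕ) (hr : 1 ≤ r) (m n : ℕ)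
    (hm : Even m) (hn : Even n) (hm0 : 0 < m) (hn0 : 0 < n)
    (hmr : 2 * r ≤ m) (hnr : 2 * r ≤ n) (hdvd : ¬ (p - 1) ∣ (m + n)) :
    padicNorm p
        ((∑ x ∈ (Finset.range (p ^ r) ×ˢ Finset.range (p ^ r)).filter
            (fun x : ℕ × ℕ => 0 < x.1 ∧ x.1 < x.2),
            (x.1 : ℚ) ^ m * (x.2 : ℚ) ^ n) -
          (-((p : ℚ) ^ r / 2) * bernoulli (m + n) +
            (p : ℚ) ^ (2 * r) *
              ∑ j ∈ Finset.range (m + 1),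
                ((m + 1).choose j : ℚ) * ((m + n + 1 - j : ℕ) : ℚ) *
                  bernoulli j * bernoulli (m + n - j) / (2 * (m + 1))))
      ≤ (p : ℚ) ^ (-(2 * r : ℤ)) := by
  exact stmt_15_general p hp (five_le_of_even_of_not_sub_one_dvd hp (hm.add hn) hdvd) r hr m n
    (hm.add hn) hm0 hn0
end
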